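/- arXiv:2211.11341 — 2 statements merged into one kernel-verified Lean document; each statement's English description precedes it below -/
import Mathlib

section
/- For every fixed integer t ≥ 1 there exists a constant C = C(t) > 0 such that for all integers k ≥ t+3 and all integers n ≥ C · k^{3/2 + ε}, where ε = (10+t)/(2(k−t−2)), every t-intersecting family F ⊆ binom([n],k) satisfies |I(F)| ≤ |I(A_t)|, where A_t = {A ∈ binom([n],k) : |A ∩ {1,…,t+2}| ≥ t+1}. -/
open Finset

/-- The collection of distinct intersections `{F ∩ G : F, G ∈ 𝓕, F ≠ G}`. -/
def interFam (F : Finset (Finset ℕ)) : Finset (Finset ℕ) :=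
  ((F ×ˢ F).filter fun p => p.1 ≠ p.2).image fun p => p.1 ∩ p.2

/-- A family is `t`-intersecting if any two members meet in at least `t` elements. -/
def tIntersecting (t : ℕ) (F : Finset (Finset ℕ)) : Prop :=
  ∀ A ∈ F, ∀ B ∈ F, t ≤ (A ∩ B).card

/-- The family `𝓐_t = {A ∈ [n]^(k) : |A ∩ {1,…,t+2}| ≥ t+1}`. -/
def At (n k t : ℕ) : Finset (Finset ℕ) :=
  ((Finset.Icc 1 n).powersetCard k).filter fun A => t + 1 ≤ (A ∩ Finset.Icc 1 (t + 2)).card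

/-- A `t`-intersecting family `F ⊆ [n]^(k)` is saturated if no `k`-set outside `F`
can be added keeping the `t`-intersecting property. -/
def saturated (n k t : ℕ) (F : Finset (Finset ℕ)) : Prop :=
  ∀ G ∈ (Finset.Icc 1 n).powersetCard k, G ∉ F → ¬ tIntersecting t (insert G F)

/-- The family of `t`-transversals `T(F)`. -/
def transv (n k t : ℕ) (F : Finset (Finset ℕ)) : Finset (Finset ℕ) :=
  (Finset.Icc 1 n).powerset.filter fun T => T.card ≤ k ∧ ∀ A ∈ F, t ≤ (T ∩ A).card

/-- The minimal members (under inclusion) of a family. -/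
def minFam (S : Finset (Finset ℕ)) : Finset (Finset ℕ) :=
  S.filter fun B => ∀ B' ∈ S, B' ⊆ B → B' = B

/-!
Write `R` for a number of order `√(n / k)`; since `n ≥ k ^ (1 + δ)`, both `n` and `k` are bounded by
a fixed power of `R`. Call `B` a kernel of `F` if some nonempty subfamily of `F` lies above `B` and
has an `R`-spread family of traces outside `B`. By the argument behind the sunflower bounds of
Alweiss, Lovett, Wu and Zhang, two spread families contain disjoint members. Hence the kernels of a
`t`-intersecting family form a `t`-intersecting family too, and a maximal-density argument shows
that only a negligible part of `F` contains no kernel of bounded size.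

Enlarge the kernels of bounded size to a maximal `t`-intersecting family of sets of bounded size. It
has boundedly many minimal members, and up to lower order terms `|I(F)|` is `n.choose (k - t - 1)`
times the number of `t`-element intersections of minimal members of size at most `t + 1`. Either
there are fewer than `(t + 2).choose 2` of these, and `F` loses to `𝓐_t`; or all `(t + 1)`-subsets
of some `(t + 2)`-set `Z` are minimal members, so that every kernel has at least `t + 1` elements in
`Z`. In the latter case, no member of `F` outside the Frankl family of `Z` contains a kernel. Such
members contribute fewer new intersections than they destroy: if `S` is disjoint from one of them,
then `F` does not contain all unions of `S` with a `(t + 1)`-subset of `Z`.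
-/

section Binomials

variable {R n i j m a : ℕ}

lemma mul_choose_le_choose_succ (h : R * (i + 1) + i ≤ n) :
    R * n.choose i ≤ n.choose (i + 1) := by
  refine Nat.le_of_mul_le_mul_right ?_ i.succ_pos
  calc R * n.choose i * (i + 1) = n.choose i * (R * (i + 1)) := by ring
    _ ≤ n.choose i * (n - i) := by gcongr; omega
    _ = n.choose (i + 1) * (i + 1) := (Nat.choose_succ_right_eq n i).symm

lemma pow_mul_choose_le_choose_add (h : R * (i + j) + (i + j) ≤ n) :
    R ^ j * n.choose i ≤ n.choose (i + j) := by
  induction j with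
  | zero => simp
  | succ j ih =>
    calc R ^ (j + 1) * n.choose i = R * (R ^ j * n.choose i) := by ring
      _ ≤ R * n.choose (i + j) := by gcongr; exact ih (by nlinarith)
      _ ≤ n.choose (i + j + 1) := mul_choose_le_choose_succ (by nlinarith)

lemma mul_choose_le_succ_choose_succ (h : R * (i + 1) ≤ n + 1) :
    R * n.choose i ≤ (n + 1).choose (i + 1) := by
  refine Nat.le_of_mul_le_mul_right ?_ i.succ_pos
  calc R * n.choose i * (i + 1) = R * (i + 1) * n.choose i := by ring
    _ ≤ (n + 1) * n.choose i := by gcongr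
    _ = (n + 1).choose (i + 1) * (i + 1) := Nat.add_one_mul_choose_eq n i

lemma pow_mul_choose_le_add_choose_add (h : R * (i + j) ≤ n + j) :
    R ^ j * n.choose i ≤ (n + j).choose (i + j) := by
  obtain rfl | hR := R.eq_zero_or_pos
  · cases j <;> simp
  induction j with
  | zero => simp
  | succ j ih =>
    calc R ^ (j + 1) * n.choose i = R * (R ^ j * n.choose i) := by ring
      _ ≤ R * (n + j).choose (i + j) := by gcongr; exact ih (by linarith)
      _ ≤ (n + j + 1).choose (i + j + 1) := mul_choose_le_succ_choose_succ h

lemma choose_add_le_pow_mul_choose (n i j : ℕ) : n.choose (i + j) ≤ n ^ j * n.choose i := by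
  induction j with
  | zero => simp
  | succ j ih =>
    calc n.choose (i + j + 1) ≤ n.choose (i + j + 1) * (i + j + 1) :=
          Nat.le_mul_of_pos_right _ (Nat.succ_pos _)
      _ = n.choose (i + j) * (n - (i + j)) := Nat.choose_succ_right_eq n (i + j)
      _ ≤ n ^ j * n.choose i * n := by gcongr; omega
      _ = n ^ (j + 1) * n.choose i := by ring

lemma add_choose_succ_le (n m a : ℕ) :
    (n + a).choose (m + 1) ≤ n.choose (m + 1) + a * (n + a).choose m := by
  induction a with
  | zero => simp
  | succ a ih =>
    have mono : (n + a).choose m ≤ (n + (a + 1)).choose m := Nat.choose_le_choose m (by omega)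
    calc (n + a + 1).choose (m + 1) = (n + a).choose m + (n + a).choose (m + 1) :=
          Nat.choose_succ_succ _ _
      _ ≤ (n + a).choose m + (n.choose (m + 1) + a * (n + a).choose m) := by gcongr
      _ = n.choose (m + 1) + (a + 1) * (n + a).choose m := by ring
      _ ≤ _ := by gcongr

lemma mul_choose_le_mul_choose_sub_add (ha : a ≤ n) (h : R * m + m ≤ n) :
    R * n.choose m ≤ R * (n - a).choose m + a * n.choose m := by
  obtain ⟨c, rfl⟩ := Nat.exists_eq_add_of_le' ha
  rw [Nat.add_sub_cancel]
  cases m with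
  | zero => simp
  | succ m =>
    calc R * (c + a).choose (m + 1)
        ≤ R * (c.choose (m + 1) + a * (c + a).choose m) := by gcongr; exact add_choose_succ_le c m a
      _ = R * c.choose (m + 1) + a * (R * (c + a).choose m) := by ring
      _ ≤ _ := by gcongr; exact mul_choose_le_choose_succ (by omega)

lemma choose_le_two_mul_choose_sub (hR : 0 < R) (haR : 2 * a ≤ R) (ha : a ≤ n)
    (h : R * m + m ≤ n) : n.choose m ≤ 2 * (n - a).choose m := by
  have key := mul_choose_le_mul_choose_sub_add ha h
  have half : 2 * a * n.choose m ≤ R * n.choose m := by gcongr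
  refine Nat.le_of_mul_le_mul_left ?_ hR
  linarith

end Binomials

section SmallSubsets

variable {α : Type*}

/-- The subsets of `U` with fewer than `m` elements, the counterpart of `Finset.powersetCard`. -/
def powersetCardLT (m : ℕ) (U : Finset α) : Finset (Finset α) := {S ∈ U.powerset | #S < m}

lemma mem_powersetCardLT {m : ℕ} {U S : Finset α} :
    S ∈ powersetCardLT m U ↔ S ⊆ U ∧ #S < m := by
  simp [powersetCardLT]

@[simp]
lemma powersetCardLT_zero (U : Finset α) : powersetCardLT 0 U = ∅ := by
  simp [powersetCardLT]

lemma card_powersetCardLT_succ (m : ℕ) (U : Finset α) :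
    #(powersetCardLT (m + 1) U) = #(powersetCardLT m U) + (#U).choose m := by
  classical
  rw [← card_powersetCard, ← card_union_of_disjoint]
  · congr 1
    ext S
    simp only [mem_union, mem_powersetCardLT, mem_powersetCard]
    grind
  · simp only [disjoint_left, mem_powersetCardLT, mem_powersetCard]
    grind

lemma card_powersetCardLT_succ_le_pow (m : ℕ) (U : Finset α) :
    #(powersetCardLT (m + 1) U) ≤ (#U + 1) ^ m := by
  induction m with
  | zero => simp [card_powersetCardLT_succ]
  | succ m ih =>
    have choose_le : (#U).choose (m + 1) ≤ #U * (#U + 1) ^ m :=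
      calc (#U).choose (m + 1) ≤ #U ^ (m + 1) := Nat.choose_le_pow _ _
        _ = #U * #U ^ m := pow_succ' _ _
        _ ≤ #U * (#U + 1) ^ m := by gcongr; omega
    rw [card_powersetCardLT_succ, pow_succ]
    linarith

lemma mul_card_powersetCardLT_le {R m : ℕ} {U : Finset α} (hR : 2 ≤ R) (h : R * m + m ≤ #U) :
    R * #(powersetCardLT m U) ≤ 2 * (#U).choose m := by
  induction m with
  | zero => simp
  | succ m ih =>
    have step : R * (#U).choose m ≤ (#U).choose (m + 1) :=
      mul_choose_le_choose_succ (by omega)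
    have small : R * #(powersetCardLT m U) ≤ R * (#U).choose m :=
      (ih (by linarith)).trans (by gcongr)
    rw [card_powersetCardLT_succ]
    linarith

variable [DecidableEq α]

/-- The sets obtained from a member of `G` by removing at most `j` elements. -/
def shadowLE (j : ℕ) (G : Finset (Finset α)) : Finset (Finset α) :=
  G.biUnion fun A => {I ∈ A.powerset | #A ≤ #I + j}

lemma mem_shadowLE {j : ℕ} {G : Finset (Finset α)} {I : Finset α} :
    I ∈ shadowLE j G ↔ ∃ A ∈ G, I ⊆ A ∧ #A ≤ #I + j := by
  simp [shadowLE]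

lemma card_shadowLE_le {k : ℕ} {G : Finset (Finset α)} (hG : ∀ A ∈ G, #A = k) (j : ℕ) :
    #(shadowLE j G) ≤ (k + 1) ^ j * #G := by
  rw [mul_comm]
  refine card_biUnion_le_card_mul _ _ _ fun A hA => ?_
  rw [← hG A hA]
  refine le_trans ?_ (card_powersetCardLT_succ_le_pow j A)
  refine card_le_card_of_injOn (A \ ·) (fun I hI => ?_) fun I hI J hJ hIJ => ?_
  · obtain ⟨hIA, hcard⟩ := by simpa using hI
    simp only [mem_powersetCardLT, mem_coe]
    exact ⟨sdiff_subset, by rw [card_sdiff_of_subset hIA]; omega⟩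
  · rw [mem_coe, mem_filter, mem_powerset] at hI hJ
    exact (sdiff_right_inj hI.1 hJ.1).1 hIJ

lemma card_filter_superset_sdiff_le (U : Finset α) (M : Finset (Finset α)) (m : ℕ) :
    #{I ∈ U.powerset | ∃ D ∈ M, D ⊆ I ∧ #(I \ D) < m} ≤ #M * #(powersetCardLT m U) := by
  rw [← card_product]
  refine (card_le_card fun I hI => ?_).trans (card_image_le (f := fun p => p.1 ∪ p.2))
  obtain ⟨hIU, D, hD, hDI, hlt⟩ := by simpa using hI
  exact mem_image.2 ⟨(D, I \ D), mem_product.2 ⟨hD, mem_powersetCardLT.2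
    ⟨sdiff_subset.trans hIU, hlt⟩⟩, union_sdiff_of_subset hDI⟩

lemma card_filter_sdiff_le {q : ℕ} (U : Finset α) {M : Finset (Finset α)} (hM : ∀ D ∈ M, #D ≤ q)
    (m : ℕ) :
    #{I ∈ U.powerset | ∃ D ∈ M, #(I \ D) < m} ≤ #M * 2 ^ q * #(powersetCardLT m U) := by
  have hpieces : #(M.biUnion powerset) ≤ #M * 2 ^ q :=
    card_biUnion_le_card_mul _ _ _ fun D hD => by
      rw [card_powerset]; exact Nat.pow_le_pow_right two_pos (hM D hD)
  refine (card_le_card fun I hI => ?_).trans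
    ((card_filter_superset_sdiff_le U (M.biUnion powerset) m).trans (by gcongr))
  obtain ⟨hIU, D, hD, hlt⟩ := by simpa using hI
  simp only [mem_filter, mem_powerset, mem_biUnion]
  exact ⟨hIU, I ∩ D, ⟨D, hD, inter_subset_right⟩, inter_subset_left, by rwa [sdiff_inter_self_left]⟩

end SmallSubsets

section Spread

variable {α ι : Type*} [DecidableEq α]

/-- The indexed family `S` on `J` is `R`-spread with normalisation `N`: every set `Y` is contained
in at most `N / R ^ #Y` of the members. Allowing `N ≠ #J` makes the notion pass to subfamilies. -/
def IsSpread (R N : ℕ) (J : Finset ι) (S : ι → Finset α) : Prop :=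
  ∀ Y, R ^ #Y * #{i ∈ J | Y ⊆ S i} ≤ N

variable {R N u K : ℕ} {J J' : Finset ι} {S S' : ι → Finset α}

lemma IsSpread.mono (h : IsSpread R N J S) (hJ : J' ⊆ J) (hS : ∀ i ∈ J', S' i ⊆ S i) :
    IsSpread R N J' S' := fun Y =>
  (Nat.mul_le_mul_left _ <| card_le_card fun i hi => by
    obtain ⟨hi, hY⟩ := mem_filter.1 hi
    exact mem_filter.2 ⟨hJ hi, hY.trans (hS i hi)⟩).trans (h Y)

lemma IsSpread.pow_mul_card_filter_inter_le (h : IsSpread R N J S) (u : ℕ) (A : Finset α) :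
    R ^ u * #{i ∈ J | u ≤ #(S i ∩ A)} ≤ 2 ^ #A * N := by
  classical
  have cover : {i ∈ J | u ≤ #(S i ∩ A)} ⊆
      (powersetCard u A).biUnion fun Y => {i ∈ J | Y ⊆ S i} := fun i hi => by
    obtain ⟨hi, hu⟩ := mem_filter.1 hi
    obtain ⟨Y, hY, hYu⟩ := exists_subset_card_eq hu
    exact mem_biUnion.2 ⟨Y, mem_powersetCard.2 ⟨hY.trans inter_subset_right, hYu⟩,
      mem_filter.2 ⟨hi, hY.trans inter_subset_left⟩⟩
  calc R ^ u * #{i ∈ J | u ≤ #(S i ∩ A)}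
      ≤ R ^ u * ∑ Y ∈ powersetCard u A, #{i ∈ J | Y ⊆ S i} := by
        gcongr; exact (card_le_card cover).trans card_biUnion_le
    _ = ∑ Y ∈ powersetCard u A, R ^ #Y * #{i ∈ J | Y ⊆ S i} := by
        rw [mul_sum]
        exact sum_congr rfl fun Y hY => by rw [(mem_powersetCard.1 hY).2]
    _ ≤ #(powersetCard u A) * N := sum_le_card_nsmul _ _ _ fun Y _ => h Y
    _ ≤ 2 ^ #A * N := by rw [card_powersetCard]; gcongr; exact Nat.choose_le_two_pow _ _

open Classical in
/-- The indices `i` for which no member inside `W ∪ S i` has fewer than `u` elements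
outside `W`. -/
noncomputable def badIndices (u : ℕ) (J : Finset ι) (S : ι → Finset α) (W : Finset α) : Finset ι :=
  {i ∈ J | ∀ i' ∈ J, S i' ⊆ W ∪ S i → u ≤ #(S i' \ W)}

lemma IsSpread.exists_residual [DecidableEq ι] (h : IsSpread R N J S) (u : ℕ) (W : Finset α) :
    ∃ S' : ι → Finset α, IsSpread R N (J \ badIndices u J S W) S' ∧
      ∀ i ∈ J \ badIndices u J S W, #(S' i) < u ∧ ∃ i' ∈ J, S i' ⊆ W ∪ S' i := by
  have hgood : ∀ i ∈ J \ badIndices u J S W, ∃ i' ∈ J, S i' ⊆ W ∪ S i ∧ #(S i' \ W) < u := by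
    intro i hi
    simpa [badIndices, (mem_sdiff.1 hi).1] using (mem_sdiff.1 hi).2
  choose! φ hφJ hφsub hφu using hgood
  refine ⟨fun i => S (φ i) \ W, h.mono sdiff_subset fun i hi => ?_, fun i hi =>
    ⟨hφu i hi, φ i, hφJ i hi, by simp [subset_union_right]⟩⟩
  exact sdiff_le_iff.2 (hφsub i hi)

open Classical in
lemma IsSpread.pow_mul_card_filter_forall_inter_le (h : IsSpread R N J S)
    (hK : ∀ i ∈ J, #(S i) ≤ K) (u : ℕ) (W : Finset α) :
    R ^ u * #{i ∈ J | S i ⊆ W ∧ ∀ i' ∈ J, S i' ⊆ W → u ≤ #(S i' ∩ S i)} ≤ 2 ^ K * N := by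
  obtain hT | ⟨i₀, hi₀⟩ :=
    {i ∈ J | S i ⊆ W ∧ ∀ i' ∈ J, S i' ⊆ W → u ≤ #(S i' ∩ S i)}.eq_empty_or_nonempty
  · simp [hT]
  obtain ⟨hi₀J, -, hi₀u⟩ := mem_filter.1 hi₀
  calc _ ≤ R ^ u * #{i ∈ J | u ≤ #(S i ∩ S i₀)} := by
        gcongr with i hi
        exact fun hiW => hi₀u i hi hiW.1
    _ ≤ 2 ^ #(S i₀) * N := h.pow_mul_card_filter_inter_le u (S i₀)
    _ ≤ 2 ^ K * N := by gcongr; exacts [one_le_two, hK i₀ hi₀J]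

end Spread

section Colourings

variable {α ι : Type*} [Fintype α] {m r : ℕ} [NeZero m]

/-- The colour class of `0`: for a uniformly random `c`, a random subset of `α` of density
`1 / m`. -/
def zeroSet (c : α → Fin m) : Finset α := {x | c x = 0}

lemma mem_zeroSet {c : α → Fin m} {x : α} : x ∈ zeroSet c ↔ c x = 0 := by simp [zeroSet]

/-- The points that receive colour `0` in at least one of `r` colourings. -/
def zeroUnion (ω : Fin r → α → Fin m) : Finset α := {x | ∃ j, ω j x = 0}

lemma mem_zeroUnion {ω : Fin r → α → Fin m} {x : α} : x ∈ zeroUnion ω ↔ ∃ j, ω j x = 0 := by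
  simp [zeroUnion]

variable [DecidableEq α]

lemma card_filter_zeroSet_union_le (A : Finset α) (P : Finset α → Prop) [DecidablePred P] :
    #{c : α → Fin m | P (zeroSet c ∪ A)} ≤
      m ^ #A * #{c : α → Fin m | A ⊆ zeroSet c ∧ P (zeroSet c)} := by
  let recolour (c : α → Fin m) : α → Fin m := A.piecewise 0 c
  have hzero (c : α → Fin m) : zeroSet (recolour c) = zeroSet c ∪ A := by
    ext x
    by_cases hx : x ∈ A <;> simp [recolour, mem_zeroSet, hx]
  refine card_le_mul_card_image_of_maps_to (f := recolour) (fun c hc => ?_) _ fun c' _ => ?_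
  · rw [mem_filter_univ, hzero]
    exact ⟨subset_union_right, (mem_filter.1 hc).2⟩
  · calc _ ≤ #(univ : Finset (A → Fin m)) := by
          refine card_le_card_of_injOn (fun c x => c x) (by simp) fun c hc d hd hcd => ?_
          rw [mem_coe, mem_filter] at hc hd
          ext x : 1
          by_cases hx : x ∈ A
          · exact congrFun hcd ⟨x, hx⟩
          · simpa [recolour, hx] using congrFun (hc.2.trans hd.2.symm) x
      _ = m ^ #A := by simp

variable {R N u K : ℕ} {J : Finset ι} {S : ι → Finset α}

lemma IsSpread.pow_mul_sum_card_badIndices_le (h : IsSpread R N J S)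
    (hK : ∀ i ∈ J, #(S i) ≤ K) (u : ℕ) :
    R ^ u * ∑ c : α → Fin m, #(badIndices u J S (zeroSet c)) ≤
      m ^ Fintype.card α * ((2 * m) ^ K * N) := by
  classical
  let P (i : ι) (W : Finset α) : Prop := ∀ i' ∈ J, S i' ⊆ W → u ≤ #(S i' ∩ S i)
  have hbad (i : ι) : #{c : α → Fin m | ∀ i' ∈ J, S i' ⊆ zeroSet c ∪ S i → u ≤ #(S i' \ zeroSet c)}
      ≤ #{c : α → Fin m | P i (zeroSet c ∪ S i)} := card_le_card fun c hc => by
    simp only [mem_filter_univ, P] at hc ⊢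
    refine fun i' hi' hsub => (hc i' hi' hsub).trans (card_le_card fun x hx => ?_)
    grind
  calc R ^ u * ∑ c : α → Fin m, #(badIndices u J S (zeroSet c))
      = R ^ u * ∑ i ∈ J,
          #{c : α → Fin m | ∀ i' ∈ J, S i' ⊆ zeroSet c ∪ S i → u ≤ #(S i' \ zeroSet c)} := by
        congr 1
        exact sum_card_bipartiteAbove_eq_sum_card_bipartiteBelow _
    _ ≤ R ^ u * ∑ i ∈ J, m ^ K * #{c : α → Fin m | S i ⊆ zeroSet c ∧ P i (zeroSet c)} := by
        gcongr with i hi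
        refine (hbad i).trans ((card_filter_zeroSet_union_le _ (P i)).trans ?_)
        gcongr
        exacts [Nat.pos_of_neZero m, hK i hi]
    _ = m ^ K * ∑ c : α → Fin m, R ^ u * #{i ∈ J | S i ⊆ zeroSet c ∧ P i (zeroSet c)} := by
        rw [← mul_sum, ← mul_sum, mul_left_comm]
        congr 2
        exact (sum_card_bipartiteAbove_eq_sum_card_bipartiteBelow _).symm
    _ ≤ m ^ K * ∑ _c : α → Fin m, 2 ^ K * N := by
        exact Nat.mul_le_mul_left _ (sum_le_sum fun c _ =>
          h.pow_mul_card_filter_forall_inter_le hK u (zeroSet c))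
    _ = m ^ Fintype.card α * ((2 * m) ^ K * N) := by simp [mul_pow]; ring

open Classical in
lemma IsSpread.mul_card_filter_badIndices_le (h : IsSpread R N J S) (hR : 4 * m ^ 2 ≤ R)
    (hN : 0 < N) (hu : u ≠ 0) (hK : ∀ i ∈ J, #(S i) ≤ 2 * u) (β : ℕ) :
    R * #{c : α → Fin m | N < β * #(badIndices u J S (zeroSet c))} ≤
      β * (4 * m ^ 2) * m ^ Fintype.card α := by
  have markov : N * #{c : α → Fin m | N < β * #(badIndices u J S (zeroSet c))} ≤
      β * ∑ c : α → Fin m, #(badIndices u J S (zeroSet c)) := by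
    rw [mul_sum, mul_comm N, ← smul_eq_mul]
    refine (card_nsmul_le_sum _ _ _ fun c hc => (mem_filter.1 hc).2.le).trans ?_
    exact sum_le_sum_of_subset (filter_subset _ _)
  have hRpos : 0 < R := lt_of_lt_of_le (by have := Nat.pos_of_neZero m; positivity) hR
  obtain ⟨v, rfl⟩ := Nat.exists_eq_succ_of_ne_zero hu
  refine Nat.le_of_mul_le_mul_left ?_ (show 0 < R ^ v * N by positivity)
  calc R ^ v * N * (R * #{c : α → Fin m | N < β * #(badIndices (v + 1) J S (zeroSet c))})
      = R ^ (v + 1) * (N * #{c : α → Fin m | N < β * #(badIndices (v + 1) J S (zeroSet c))}) := by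
        ring
    _ ≤ R ^ (v + 1) * (β * ∑ c : α → Fin m, #(badIndices (v + 1) J S (zeroSet c))) := by gcongr
    _ = β * (R ^ (v + 1) * ∑ c : α → Fin m, #(badIndices (v + 1) J S (zeroSet c))) := by ring
    _ ≤ β * (m ^ Fintype.card α * ((2 * m) ^ (2 * (v + 1)) * N)) := by
        exact Nat.mul_le_mul_left _ <| h.pow_mul_sum_card_badIndices_le hK (v + 1)
    _ = (4 * m ^ 2) ^ v * N * (β * (4 * m ^ 2) * m ^ Fintype.card α) := by rw [pow_mul]; ring
    _ ≤ R ^ v * N * (β * (4 * m ^ 2) * m ^ Fintype.card α) := by gcongr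

lemma zeroUnion_cons (c : α → Fin m) (ω : Fin r → α → Fin m) :
    zeroUnion (Fin.cons c ω : Fin (r + 1) → α → Fin m) = zeroSet c ∪ zeroUnion ω := by
  ext x
  simp [mem_zeroUnion, mem_zeroSet, Fin.exists_fin_succ]

variable (m r) in
/-- The `r`-tuples of colourings whose `zeroUnion` contains no member of the family `S`. -/
def noncapturing (J : Finset ι) (S : ι → Finset α) : Finset (Fin r → α → Fin m) :=
  {ω | ∀ i ∈ J, ¬ S i ⊆ zeroUnion ω}

lemma card_noncapturing_succ (J : Finset ι) (S : ι → Finset α) :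
    #(noncapturing m (r + 1) J S) =
      ∑ c : α → Fin m, #{ω : Fin r → α → Fin m | ∀ i ∈ J, ¬ S i ⊆ zeroSet c ∪ zeroUnion ω} := by
  rw [noncapturing, card_filter, ← (Fin.consEquiv fun _ => α → Fin m).sum_comp,
    Fintype.sum_prod_type]
  refine sum_congr rfl fun c _ => ?_
  rw [card_filter]
  refine sum_congr rfl fun ω _ => ?_
  simp only [← zeroUnion_cons]
  rfl

lemma card_filter_le_card_noncapturing {J J' : Finset ι} {S S' : ι → Finset α} {W : Finset α}
    (h : ∀ i ∈ J', ∃ i' ∈ J, S i' ⊆ W ∪ S' i) :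
    #{ω : Fin r → α → Fin m | ∀ i ∈ J, ¬ S i ⊆ W ∪ zeroUnion ω} ≤ #(noncapturing m r J' S') := by
  refine card_le_card <| monotone_filter_right _ fun ω _ hω i hi hsub => ?_
  obtain ⟨i', hi', hi'sub⟩ := h i hi
  exact hω i' hi' (hi'sub.trans (union_subset_union_right hsub))

lemma mul_lt_mul_card_sdiff [DecidableEq ι] {E : Finset ι} {β : ℕ} (hJ : (r + 1) * N < β * #J)
    (hE : β * #E ≤ N) : r * N < β * #(J \ E) := by
  have : β * #J ≤ β * #(J \ E) + β * #E := by
    rw [← mul_add]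
    exact Nat.mul_le_mul_left _ card_le_card_sdiff_add_card
  linarith

-- The members of a spread family shrink by half with each colouring: all but few indices have a
-- residual of at most half the size, and the residuals form a spread family again.
lemma IsSpread.mul_card_noncapturing_le (h : IsSpread R N J S) (hR : 4 * m ^ 2 ≤ R) (hN : 0 < N)
    (hS : ∀ i ∈ J, #(S i) < 2 ^ r) {β : ℕ} (hJ : r * N < β * #J) :
    R * #(noncapturing m r J S) ≤ r * (β * (4 * m ^ 2)) * (m ^ Fintype.card α) ^ r := by
  classical
  induction r generalizing J S with
  | zero =>
    obtain ⟨i, hi⟩ : J.Nonempty := card_pos.1 (Nat.pos_of_mul_pos_left (by simpa using hJ))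
    have hi0 : S i = ∅ := by simpa using hS i hi
    have : noncapturing m 0 J S = ∅ := filter_false_of_mem fun ω _ hω => hω i hi (by simp [hi0])
    simp [this]
  | succ r ih =>
    set A := 4 * m ^ 2
    set X := m ^ Fintype.card α
    have hX : Fintype.card (Fin r → α → Fin m) = X ^ r := by simp [X]
    let bad (c : α → Fin m) : Prop := N < β * #(badIndices (2 ^ r) J S (zeroSet c))
    have few_bad : R * #{c | bad c} ≤ β * A * X :=
      h.mul_card_filter_badIndices_le hR hN (by positivity)
        (fun i hi => (hS i hi).le.trans_eq (pow_succ' 2 r)) β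
    have good_colour (c : α → Fin m) (hc : ¬ bad c) :
        R * #{ω : Fin r → α → Fin m | ∀ i ∈ J, ¬ S i ⊆ zeroSet c ∪ zeroUnion ω}
          ≤ r * (β * A) * X ^ r := by
      obtain ⟨S', hspread, hS'⟩ := h.exists_residual (2 ^ r) (zeroSet c)
      exact (Nat.mul_le_mul_left _ <|
        card_filter_le_card_noncapturing fun i hi => (hS' i hi).2).trans <|
          ih hspread (fun i hi => (hS' i hi).1) (mul_lt_mul_card_sdiff hJ (not_lt.1 hc))
    have each_colour (c : α → Fin m) :
        R * #{ω : Fin r → α → Fin m | ∀ i ∈ J, ¬ S i ⊆ zeroSet c ∪ zeroUnion ω}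
          ≤ r * (β * A) * X ^ r + if bad c then R * X ^ r else 0 := by
      split_ifs with hc
      · exact le_add_left (Nat.mul_le_mul_left _ (hX ▸ card_le_univ _))
      · exact good_colour c hc
    rw [card_noncapturing_succ, mul_sum]
    calc _ ≤ ∑ c : α → Fin m, (r * (β * A) * X ^ r + if bad c then R * X ^ r else 0) :=
          sum_le_sum fun c _ => each_colour c
      _ = X * (r * (β * A) * X ^ r) + R * #{c | bad c} * X ^ r := by
          rw [sum_add_distrib, ← sum_filter]
          simp [X]
          ring
      _ ≤ X * (r * (β * A) * X ^ r) + β * A * X * X ^ r := by gcongr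
      _ = (r + 1 : ℕ) * (β * A) * X ^ (r + 1) := by ring

lemma IsSpread.two_mul_card_noncapturing_lt (h : IsSpread R N J S) (hR : 64 * (r + 1) ^ 4 ≤ R)
    (hN : 0 < N) (hS : ∀ i ∈ J, #(S i) < 2 ^ r) (hJ : N ≤ 2 * #J) :
    2 * #(noncapturing (2 * r + 2) r J S) < Fintype.card (Fin r → α → Fin (2 * r + 2)) := by
  have hm : 4 * (2 * r + 2) ^ 2 ≤ R := by
    calc 4 * (2 * r + 2) ^ 2 = 16 * (r + 1) ^ 2 * 1 := by ring
      _ ≤ 16 * (r + 1) ^ 2 * (4 * (r + 1) ^ 2) := by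
        gcongr; exact Nat.succ_le_of_lt (by positivity)
      _ ≤ R := by linarith
  have key := h.mul_card_noncapturing_le hm hN hS (β := 2 * r + 1) (by nlinarith)
  have hcard : Fintype.card (Fin r → α → Fin (2 * r + 2)) = ((2 * r + 2) ^ Fintype.card α) ^ r := by
    simp
  rw [hcard]
  set X := ((2 * r + 2) ^ Fintype.card α) ^ r
  have hsmall : 2 * (r * ((2 * r + 1) * (4 * (2 * r + 2) ^ 2))) < R := by
    have : 0 < (r + 1) ^ 2 := by positivity
    nlinarith
  refine Nat.lt_of_mul_lt_mul_left (a := R) ?_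
  calc R * (2 * #(noncapturing (2 * r + 2) r J S))
      ≤ 2 * (r * ((2 * r + 1) * (4 * (2 * r + 2) ^ 2))) * X := by linarith
    _ < R * X := by gcongr

end Colourings

section DisjointMembers

-- A uniformly random point of `Fin r → Fin (2 * r + 2)` has a zero coordinate with probability at
-- most `r / (2 * r + 2) < 1 / 2`.
lemma two_mul_card_filter_exists_eq_zero_le (r : ℕ) :
    2 * #{v : Fin r → Fin (2 * r + 2) | ∃ j, v j = 0} ≤ (2 * r + 2) ^ r := by
  have hcompl : ({v | ∃ j, v j = 0} : Finset (Fin r → Fin (2 * r + 2)))ᶜ =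
      Fintype.piFinset fun _ => {0}ᶜ := by
    ext v
    simp
  have bernoulli : (2 * r + 2) ^ r ≤ 2 * (2 * r + 1) ^ r := by
    have h : (1 : ℝ) + r * (-1 / (2 * r + 2)) ≤ (1 + -1 / (2 * r + 2)) ^ r :=
      one_add_mul_le_pow (by rw [le_div_iff₀] <;> linarith) r
    have hbase : (1 : ℝ) + -1 / (2 * r + 2) = (2 * r + 1) / (2 * r + 2) := by field_simp; ring
    have hhalf : (1 : ℝ) / 2 ≤ 1 + r * (-1 / (2 * r + 2)) := by field_simp; linarith
    rw [hbase, div_pow] at h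
    have := (le_div_iff₀ (by positivity)).1 (hhalf.trans h)
    exact_mod_cast (by linarith : ((2 : ℝ) * r + 2) ^ r ≤ 2 * (2 * r + 1) ^ r)
  have htotal := card_add_card_compl ({v | ∃ j, v j = 0} : Finset (Fin r → Fin (2 * r + 2)))
  have hnone : #({v | ∃ j, v j = 0} : Finset (Fin r → Fin (2 * r + 2)))ᶜ = (2 * r + 1) ^ r := by
    rw [hcompl, Fintype.card_piFinset_const, card_compl, card_singleton, Fintype.card_fin]
    rfl
  rw [hnone, Fintype.card_fun, Fintype.card_fin, Fintype.card_fin] at htotal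
  omega

lemma exists_perm_forall_ne_zero (r : ℕ) : ∃ π : Equiv.Perm (Fin r → Fin (2 * r + 2)),
    ∀ v, (∃ j, v j = 0) → ∀ j, π v j ≠ 0 := by
  set E : Finset (Fin r → Fin (2 * r + 2)) := {v | ∃ j, v j = 0}
  have hE : #E ≤ #Eᶜ := by
    have htotal : #E + #Eᶜ = (2 * r + 2) ^ r := by simp [card_add_card_compl]
    have hhalf : 2 * #E ≤ (2 * r + 2) ^ r := two_mul_card_filter_exists_eq_zero_le r
    omega
  obtain ⟨E', hE', hcard⟩ := exists_subset_card_eq hE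
  let e : {v // v ∈ E} ≃ {v // v ∈ E'} := Finset.equivOfCardEq hcard.symm
  refine ⟨e.extendSubtype, fun v hv j hj => ?_⟩
  have hπv : e.extendSubtype v ∈ Eᶜ := hE' (e.extendSubtype_mem v (by simpa [E] using hv))
  simp only [E, mem_compl, mem_filter_univ] at hπv
  exact hπv ⟨j, hj⟩

variable {α ι ι' : Type*} [DecidableEq α] {R N N' r : ℕ} {J : Finset ι} {J' : Finset ι'}
  {S : ι → Finset α} {S' : ι' → Finset α}

-- Applying the permutation of `exists_perm_forall_ne_zero` at every point of `α` turns a uniformly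
-- random tuple of colourings into another one, whose `zeroUnion` is disjoint from the first.
lemma IsSpread.exists_disjoint_of_finite [Finite α] (h : IsSpread R N J S)
    (h' : IsSpread R N' J' S') (hR : 64 * (r + 1) ^ 4 ≤ R) (hN : 0 < N) (hN' : 0 < N')
    (hS : ∀ i ∈ J, #(S i) < 2 ^ r) (hS' : ∀ i ∈ J', #(S' i) < 2 ^ r)
    (hJ : N ≤ 2 * #J) (hJ' : N' ≤ 2 * #J') :
    ∃ i ∈ J, ∃ i' ∈ J', Disjoint (S i) (S' i') := by
  cases nonempty_fintype α
  obtain ⟨π, hπ⟩ := exists_perm_forall_ne_zero r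
  let flip (ω : Fin r → α → Fin (2 * r + 2)) : Fin r → α → Fin (2 * r + 2) :=
    fun j x => π (fun j' => ω j' x) j
  have flip_injective : Function.Injective flip := fun ω ω' hω => by
    have (x : α) : (fun j => ω j x) = fun j => ω' j x :=
      π.injective (funext fun j => congrFun₂ hω j x)
    exact funext₂ fun j x => congrFun (this x) j
  set B := noncapturing (2 * r + 2) r J S
  set B' : Finset (Fin r → α → Fin (2 * r + 2)) :=
    {ω | flip ω ∈ noncapturing (2 * r + 2) r J' S'}
  have hB' : #B' ≤ #(noncapturing (2 * r + 2) r J' S') :=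
    card_le_card_of_injOn flip (fun ω hω => (mem_filter.1 hω).2) flip_injective.injOn
  obtain ⟨ω, -, hω⟩ : ∃ ω ∈ univ, ω ∉ B ∪ B' := by
    refine exists_mem_notMem_of_card_lt_card ?_
    have hB : 2 * #B < _ := h.two_mul_card_noncapturing_lt hR hN hS hJ
    have := h'.two_mul_card_noncapturing_lt hR hN' hS' hJ'
    have := card_union_le B B'
    rw [card_univ]
    omega
  obtain ⟨⟨i, hi, hsub⟩, i', hi', hsub'⟩ :
      (∃ i ∈ J, S i ⊆ zeroUnion ω) ∧ ∃ i' ∈ J', S' i' ⊆ zeroUnion (flip ω) := by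
    simpa [B, B', noncapturing] using hω
  refine ⟨i, hi, i', hi', disjoint_left.2 fun x hx hx' => ?_⟩
  obtain ⟨j, hj⟩ := mem_zeroUnion.1 (hsub' hx')
  exact hπ _ (mem_zeroUnion.1 (hsub hx)) j hj

lemma IsSpread.subtype (h : IsSpread R N J S) (U : Finset α) :
    IsSpread R N J fun i => (S i).subtype (· ∈ U) := by
  intro Y
  refine le_trans ?_ (h (Y.map (Function.Embedding.subtype _)))
  rw [card_map]
  gcongr with i
  intro hY x hx
  obtain ⟨y, hy, rfl⟩ := mem_map.1 hx
  exact mem_subtype.1 (hY hy)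

theorem IsSpread.exists_disjoint (h : IsSpread R N J S) (h' : IsSpread R N' J' S')
    (hR : 64 * (r + 1) ^ 4 ≤ R) (hN : 0 < N) (hN' : 0 < N')
    (hS : ∀ i ∈ J, #(S i) < 2 ^ r) (hS' : ∀ i ∈ J', #(S' i) < 2 ^ r)
    (hJ : N ≤ 2 * #J) (hJ' : N' ≤ 2 * #J') :
    ∃ i ∈ J, ∃ i' ∈ J', Disjoint (S i) (S' i') := by
  let U := J.biUnion S
  have card_subtype_le (T : Finset α) : #(T.subtype (· ∈ U)) ≤ #T := by
    rw [card_subtype]; exact card_filter_le _ _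
  obtain ⟨i, hi, i', hi', hdisj⟩ := (h.subtype U).exists_disjoint_of_finite (h'.subtype U)
    hR hN hN' (fun i hi => (card_subtype_le _).trans_lt (hS i hi))
    (fun i hi => (card_subtype_le _).trans_lt (hS' i hi)) hJ hJ'
  refine ⟨i, hi, i', hi', disjoint_left.2 fun x hx hx' => ?_⟩
  have hxU : x ∈ U := mem_biUnion.2 ⟨i, hi, hx⟩
  exact disjoint_left.1 hdisj (mem_subtype (a := ⟨x, hxU⟩) |>.2 hx) (mem_subtype.2 hx')

end DisjointMembers

section Kernels

variable {α : Type*} [DecidableEq α]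

/-- All members of the nonempty family `G` contain `B`, and the family of their traces outside `B`
is `R`-spread. -/
structure IsSpreadOver (R : ℕ) (B : Finset α) (G : Finset (Finset α)) : Prop where
  nonempty : G.Nonempty
  subset : ∀ A ∈ G, B ⊆ A
  isSpread : IsSpread R #G G (· \ B)

-- Take `B` of maximal size subject to the displayed inequality.
lemma exists_isSpreadOver (R : ℕ) {G : Finset (Finset α)} (hG : G.Nonempty) :
    ∃ B, IsSpreadOver R B {A ∈ G | B ⊆ A} ∧ #G ≤ R ^ #B * #{A ∈ G | B ⊆ A} := by
  set dense : Finset (Finset α) :=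
    {B ∈ G.biUnion powerset | #G ≤ R ^ #B * #{A ∈ G | B ⊆ A}} with hdense
  have mem_dense {B : Finset α} :
      B ∈ dense ↔ (∃ A ∈ G, B ⊆ A) ∧ #G ≤ R ^ #B * #{A ∈ G | B ⊆ A} := by
    simp [hdense]
  have hempty : ∅ ∈ dense := mem_dense.2 ⟨hG.imp fun A hA => ⟨hA, empty_subset A⟩, by simp⟩
  obtain ⟨B, hB, hmax⟩ := exists_max_image dense card ⟨∅, hempty⟩
  obtain ⟨⟨A, hA, hBA⟩, hBG⟩ := mem_dense.1 hB
  refine ⟨B, ⟨⟨A, mem_filter.2 ⟨hA, hBA⟩⟩, fun A hA => (mem_filter.1 hA).2, fun Y => ?_⟩, hBG⟩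
  obtain rfl | hY := Y.eq_empty_or_nonempty
  · simp
  obtain hnone | ⟨A', hA'⟩ := {A ∈ {A ∈ G | B ⊆ A} | Y ⊆ A \ B}.eq_empty_or_nonempty
  · simp [hnone]
  obtain ⟨⟨hA'G, hBA'⟩, hYA', hYB⟩ := by simpa only [mem_filter, subset_sdiff] using hA'
  have hcard : #(B ∪ Y) = #B + #Y := card_union_of_disjoint hYB.symm
  have hfilter : {A ∈ {A ∈ G | B ⊆ A} | Y ⊆ A \ B} = {A ∈ G | B ∪ Y ⊆ A} := by
    simp only [filter_filter, subset_sdiff, hYB, and_true, union_subset_iff]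
  have hsparse : R ^ #(B ∪ Y) * #{A ∈ G | B ∪ Y ⊆ A} < #G := by
    by_contra! h
    have := hmax _ (mem_dense.2 ⟨⟨A', hA'G, union_subset hBA' hYA'⟩, h⟩)
    have := hY.card_pos
    omega
  rw [hcard, pow_add, mul_assoc] at hsparse
  rw [hfilter]
  exact (Nat.lt_of_mul_lt_mul_left (hsparse.trans_le hBG)).le

variable {R q r t : ℕ} {B C : Finset α} {F G H : Finset (Finset α)}

lemma IsSpreadOver.card_le_two_mul_card_filter_disjoint (h : IsSpreadOver R B G)
    (hC : 2 * #C ≤ R) : #G ≤ 2 * #{A ∈ G | Disjoint A (C \ B)} := by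
  obtain rfl | hR := R.eq_zero_or_pos
  · obtain rfl : C = ∅ := by simpa using hC
    simp
    omega
  have cover : {A ∈ G | ¬ Disjoint A (C \ B)} ⊆ C.biUnion fun x => {A ∈ G | {x} ⊆ A \ B} := by
    intro A hA
    obtain ⟨hA, x, hxA, hx⟩ := by simpa only [mem_filter, not_disjoint_iff] using hA
    obtain ⟨hxC, hxB⟩ := mem_sdiff.1 hx
    exact mem_biUnion.2 ⟨x, hxC, mem_filter.2 ⟨hA, by simp [hxA, hxB]⟩⟩
  have meets_few : R * #{A ∈ G | ¬ Disjoint A (C \ B)} ≤ #C * #G := by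
    calc _ ≤ R * ∑ x ∈ C, #{A ∈ G | {x} ⊆ A \ B} := by
          gcongr; exact (card_le_card cover).trans card_biUnion_le
      _ = ∑ x ∈ C, R * #{A ∈ G | {x} ⊆ A \ B} := mul_sum ..
      _ ≤ #C * #G := sum_le_card_nsmul _ _ _ fun x _ => by simpa using h.isSpread {x}
  have half : 2 * #{A ∈ G | ¬ Disjoint A (C \ B)} ≤ #G := by
    have := Nat.mul_le_mul_right #G hC
    exact Nat.le_of_mul_le_mul_left (by linarith) hR
  have := card_filter_add_card_filter_not (s := G) fun A => Disjoint A (C \ B)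
  omega

-- Two disjoint traces `A \ B`, `A' \ C` of members avoiding `C \ B` and `B \ C` respectively leave
-- `A ∩ A' ⊆ B ∩ C`.
lemma IsSpreadOver.le_card_inter (hG : IsSpreadOver R B G) (hH : IsSpreadOver R C H)
    (hGH : ∀ A ∈ G, ∀ A' ∈ H, t ≤ #(A ∩ A')) (hR : 64 * (r + 1) ^ 4 ≤ R)
    (hGr : ∀ A ∈ G, #A < 2 ^ r) (hHr : ∀ A ∈ H, #A < 2 ^ r) (hB : 2 * #B ≤ R) (hC : 2 * #C ≤ R) :
    t ≤ #(B ∩ C) := by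
  obtain ⟨A, hA, A', hA', hdisj⟩ :=
    (hG.isSpread.mono (filter_subset (Disjoint · (C \ B)) G) fun _ _ => Subset.rfl).exists_disjoint
      (hH.isSpread.mono (filter_subset (Disjoint · (B \ C)) H) fun _ _ => Subset.rfl)
      hR hG.nonempty.card_pos hH.nonempty.card_pos
      (fun A hA => (card_le_card sdiff_subset).trans_lt (hGr A (filter_subset _ _ hA)))
      (fun A hA => (card_le_card sdiff_subset).trans_lt (hHr A (filter_subset _ _ hA)))
      (hG.card_le_two_mul_card_filter_disjoint hC) (hH.card_le_two_mul_card_filter_disjoint hB)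
  rw [mem_filter, disjoint_left] at hA hA'
  refine (hGH A hA.1 A' hA'.1).trans (card_le_card fun x hx => ?_)
  rw [mem_inter] at hx ⊢
  have hxC : x ∈ C \ B → False := hA.2 hx.1
  have hxB : x ∈ B \ C → False := hA'.2 hx.2
  have hxAA' : x ∈ A \ B → x ∉ A' \ C := fun h => disjoint_left.1 hdisj h
  simp only [mem_sdiff] at hxC hxB hxAA'
  tauto

open Classical in
/-- The sets of size at most `q` over which some subfamily of `F` is `R`-spread: they play the role
of the sunflower kernels of `F`. -/
noncomputable def kernels (R q : ℕ) (F : Finset (Finset α)) : Finset (Finset α) :=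
  {B ∈ F.biUnion powerset | #B ≤ q ∧ ∃ G ⊆ F, IsSpreadOver R B G}

lemma mem_kernels : B ∈ kernels R q F ↔ #B ≤ q ∧ ∃ G ⊆ F, IsSpreadOver R B G := by
  simp only [kernels, mem_filter, mem_biUnion, mem_powerset, and_iff_right_iff_imp]
  rintro ⟨-, G, hGF, hG⟩
  obtain ⟨A, hA⟩ := hG.nonempty
  exact ⟨A, hGF hA, hG.subset A hA⟩

variable {k : ℕ} {U : Finset α}

lemma card_filter_superset_le (hG : G ⊆ powersetCard k U) (hB : B ⊆ U) :
    #{A ∈ G | B ⊆ A} ≤ (#U - #B).choose (k - #B) := by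
  rw [← card_sdiff_of_subset hB, ← card_powersetCard]
  refine card_le_card_of_injOn (· \ B) (fun A hA => ?_) fun A hA A' hA' h => ?_
  · obtain ⟨hA, hBA⟩ := mem_filter.1 hA
    obtain ⟨hAU, hAk⟩ := mem_powersetCard.1 (hG hA)
    exact mem_powersetCard.2
      ⟨sdiff_subset_sdiff hAU Subset.rfl, by rw [card_sdiff_of_subset hBA, hAk]⟩
  · rw [← sdiff_union_of_subset (mem_filter.1 hA).2, ← sdiff_union_of_subset (mem_filter.1 hA').2]
    exact congrArg (· ∪ B) h

lemma exists_isSpreadOver_of_kernels_not_subset (hF : F ⊆ powersetCard k U) (hGF : G ⊆ F)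
    (hG : G.Nonempty) (hno : ∀ A ∈ G, ∀ B ∈ kernels R q F, ¬ B ⊆ A) :
    ∃ B, q < #B ∧ #B ≤ k ∧ IsSpreadOver R B {A ∈ G | B ⊆ A} ∧
      #G ≤ R ^ #B * (#U - #B).choose (k - #B) := by
  obtain ⟨B, hB, hcard⟩ := exists_isSpreadOver R hG
  obtain ⟨A, hA⟩ := hB.nonempty
  obtain ⟨hAG, hBA⟩ := mem_filter.1 hA
  obtain ⟨hAU, hAk⟩ := mem_powersetCard.1 (hF (hGF hAG))
  refine ⟨B, ?_, hAk ▸ card_le_card hBA, hB, hcard.trans ?_⟩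
  · by_contra! hq
    exact hno A hAG B (mem_kernels.2 ⟨hq, _, (filter_subset _ _).trans hGF, hB⟩) hBA
  · gcongr
    exact card_filter_superset_le (hGF.trans hF) (hBA.trans hAU)

lemma pow_mul_card_le_choose_of_kernels_not_subset (hR : 0 < R) (hn : R ^ 2 * k ≤ #U)
    (hF : F ⊆ powersetCard k U) (hGF : G ⊆ F)
    (hno : ∀ A ∈ G, ∀ B ∈ kernels R q F, ¬ B ⊆ A) : R ^ (q + 1) * #G ≤ (#U).choose k := by
  obtain rfl | hG := G.eq_empty_or_nonempty
  · simp
  obtain ⟨B, hqB, hBk, -, hGB⟩ := exists_isSpreadOver_of_kernels_not_subset hF hGF hG hno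
  obtain ⟨i, rfl⟩ := Nat.exists_eq_add_of_le' hBk
  obtain ⟨N, hN⟩ := Nat.exists_eq_add_of_le' (hBk.trans ((Nat.le_mul_of_pos_left _
    (by positivity)).trans hn))
  calc R ^ (q + 1) * #G ≤ R ^ #B * (R ^ #B * (#U - #B).choose (i + #B - #B)) := by
        gcongr
        omega
    _ = (R ^ 2) ^ #B * N.choose i := by
        rw [hN, Nat.add_sub_cancel, Nat.add_sub_cancel]; ring
    _ ≤ (#U).choose (i + #B) := by
        rw [hN]; exact pow_mul_choose_le_add_choose_add (hN ▸ hn)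

end Kernels

section MinimalMembers

lemma mem_minFam {S : Finset (Finset ℕ)} {B : Finset ℕ} :
    B ∈ minFam S ↔ Minimal (· ∈ S) B := by
  simp only [minFam, mem_filter, minimal_iff]
  exact and_congr_right fun _ => forall₂_congr fun _ _ => imp_congr_right fun _ => eq_comm

lemma exists_mem_minFam_subset {S : Finset (Finset ℕ)} {B : Finset ℕ} (hB : B ∈ S) :
    ∃ M ∈ minFam S, M ⊆ B := by
  obtain ⟨M, hMB, hM⟩ := S.exists_le_minimal hB
  exact ⟨M, mem_minFam.2 hM, hMB⟩

/-- `S` is a maximal `t`-intersecting family among the families of subsets of `U` of size at most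
`q`. -/
def IsMaxTIntersecting (t q : ℕ) (U : Finset ℕ) (S : Finset (Finset ℕ)) : Prop :=
  Maximal (fun S => S ⊆ powersetCardLT (q + 1) U ∧ tIntersecting t S) S

variable {t q : ℕ} {U T : Finset ℕ} {S : Finset (Finset ℕ)}

lemma exists_isMaxTIntersecting {K : Finset (Finset ℕ)} (hK : K ⊆ powersetCardLT (q + 1) U)
    (hKt : tIntersecting t K) : ∃ S, K ⊆ S ∧ IsMaxTIntersecting t q U S := by
  have hfin : {S | S ⊆ powersetCardLT (q + 1) U ∧ tIntersecting t S}.Finite :=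
    (powersetCardLT (q + 1) U).finite_toSet.finite_subsets.preimage
      coe_injective.injOn |>.subset fun S hS => coe_subset.2 hS.1
  exact hfin.exists_le_maximal ⟨hK, hKt⟩

lemma IsMaxTIntersecting.mem_powersetCardLT (hS : IsMaxTIntersecting t q U S) :
    ∀ B ∈ S, B ⊆ U ∧ #B < q + 1 := fun _ hB =>
  _root_.mem_powersetCardLT.1 (hS.prop.1 hB)

lemma IsMaxTIntersecting.exists_card_inter_lt (hS : IsMaxTIntersecting t q U S)
    (hne : S.Nonempty) (hTU : T ⊆ U) (hTq : #T < q + 1) (hTS : T ∉ S) :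
    ∃ B ∈ S, #(T ∩ B) < t := by
  by_contra! hT
  obtain ⟨hSU, hSt⟩ := hS.prop
  obtain ⟨B₀, hB₀⟩ := hne
  have htT : t ≤ #(T ∩ T) := by
    rw [inter_self]; exact (hT B₀ hB₀).trans (card_le_card inter_subset_left)
  refine hTS (hS.le_of_ge ⟨?_, fun A hA B hB => ?_⟩ (subset_insert T S) (mem_insert_self T S))
  · exact insert_subset (_root_.mem_powersetCardLT.2 ⟨hTU, hTq⟩) hSU
  · rcases mem_insert.1 hA with rfl | hA' <;> rcases mem_insert.1 hB with rfl | hB'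
    · exact htT
    · exact hT B hB'
    · rw [inter_comm]; exact hT A hA'
    · exact hSt A hA' B hB'

-- Some `B ∈ S` meets `T` in fewer than `t` elements, so every member of `S` containing `T` contains
-- one of the at most `q` sets `insert x T` with `x ∈ B \ T`.
lemma IsMaxTIntersecting.card_filter_minFam_le (hS : IsMaxTIntersecting t q U S) (j : ℕ)
    (T : Finset ℕ) : #{M ∈ minFam S | T ⊆ M ∧ #M = #T + j} ≤ q ^ j := by
  induction j generalizing T with
  | zero =>
    refine card_le_one.2 fun M hM N hN => ?_
    rw [mem_filter] at hM hN
    exact (eq_of_subset_of_card_le hM.2.1 hM.2.2.le).symm.trans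
      (eq_of_subset_of_card_le hN.2.1 hN.2.2.le)
  | succ j ih =>
    obtain hnone | ⟨M, hM⟩ := {M ∈ minFam S | T ⊆ M ∧ #M = #T + (j + 1)}.eq_empty_or_nonempty
    · simp [hnone]
    obtain ⟨hM, hTM, hcard⟩ := mem_filter.1 hM
    rw [mem_minFam] at hM
    obtain ⟨hMU, hMq⟩ := hS.mem_powersetCardLT M hM.prop
    have hTS : T ∉ S := fun hT => by
      obtain rfl : T = M := hM.eq_of_le hT hTM
      omega
    obtain ⟨B, hB, hTB⟩ :=
      hS.exists_card_inter_lt ⟨M, hM.prop⟩ (hTM.trans hMU) (by omega) hTS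
    have cover : {M ∈ minFam S | T ⊆ M ∧ #M = #T + (j + 1)} ⊆
        (B \ T).biUnion fun x => {M ∈ minFam S | insert x T ⊆ M ∧ #M = #(insert x T) + j} := by
      intro N hN
      obtain ⟨hN, hTN, hcard⟩ := mem_filter.1 hN
      have hNB : #(T ∩ B) < #(N ∩ B) := hTB.trans_le (hS.prop.2 N (mem_minFam.1 hN).prop B hB)
      obtain ⟨x, hx, hxT⟩ := exists_mem_notMem_of_card_lt_card hNB
      rw [mem_inter] at hx hxT
      have hxT : x ∉ T := fun h => hxT ⟨h, hx.2⟩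
      refine mem_biUnion.2 ⟨x, mem_sdiff.2 ⟨hx.2, hxT⟩,
        mem_filter.2 ⟨hN, insert_subset hx.1 hTN, ?_⟩⟩
      rw [card_insert_of_notMem hxT]; omega
    calc _ ≤ #(B \ T) * q ^ j :=
          (card_le_card cover).trans (card_biUnion_le_card_mul _ _ _ fun x _ => ih _)
      _ ≤ q * q ^ j := by
          gcongr
          exact (card_le_card sdiff_subset).trans
            (Nat.lt_succ_iff.1 (hS.mem_powersetCardLT B hB).2)
      _ = q ^ (j + 1) := (pow_succ' q j).symm

lemma IsMaxTIntersecting.card_minFam_le (hS : IsMaxTIntersecting t q U S) :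
    #(minFam S) ≤ (q + 1) * (q + 1) ^ q := by
  have cover : minFam S ⊆ (range (q + 1)).biUnion fun j =>
      {M ∈ minFam S | ∅ ⊆ M ∧ #M = #(∅ : Finset ℕ) + j} := fun M hM =>
    mem_biUnion.2 ⟨#M, mem_range.2 (hS.mem_powersetCardLT M (mem_minFam.1 hM).prop).2, by simpa⟩
  refine (card_le_card cover).trans ((card_biUnion_le_card_mul _ _ ((q + 1) ^ q)
    fun j hj => (hS.card_filter_minFam_le j ∅).trans ?_).trans_eq (by rw [card_range]))
  calc q ^ j ≤ (q + 1) ^ j := Nat.pow_le_pow_left (by omega) j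
    _ ≤ (q + 1) ^ q := Nat.pow_le_pow_right (by omega) (Nat.lt_succ_iff.1 (mem_range.1 hj))

lemma isAntichain_minFam (S : Finset (Finset ℕ)) :
    IsAntichain (· ⊆ ·) (minFam S : Set (Finset ℕ)) := fun _ hA _ hB hne hAB =>
  hne ((mem_minFam.1 hB).eq_of_le (mem_minFam.1 hA).prop hAB)

end MinimalMembers

section SmallMeets

/-- The `t`-element intersections of two (possibly equal) members of `M` of size at most `t + 1`. -/
def smallMeets (t : ℕ) (M : Finset (Finset ℕ)) : Finset (Finset ℕ) :=
  {D ∈ image₂ (· ∩ ·) {A ∈ M | #A ≤ t + 1} {A ∈ M | #A ≤ t + 1} | #D = t}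

variable {t : ℕ} {A B D T Z : Finset ℕ} {M : Finset (Finset ℕ)}

lemma mem_smallMeets : D ∈ smallMeets t M ↔
    ∃ A ∈ M, #A ≤ t + 1 ∧ ∃ B ∈ M, #B ≤ t + 1 ∧ A ∩ B = D ∧ #D = t := by
  simp only [smallMeets, mem_filter, mem_image₂]
  grind

lemma smallMeets_subset_singleton (hD : #D = t) (hM : ∀ A ∈ M, #A ≤ t + 1 → D ⊆ A) :
    smallMeets t M ⊆ {D} := by
  intro E hE
  obtain ⟨A, hA, hAt, B, hB, hBt, rfl, hcard⟩ := mem_smallMeets.1 hE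
  rw [mem_singleton]
  exact (eq_of_subset_of_card_le (subset_inter (hM A hA hAt) (hM B hB hBt)) (by omega)).symm

lemma tIntersecting.eq_of_card_eq (hM : tIntersecting t M)
    (hanti : IsAntichain (· ⊆ ·) (M : Set (Finset ℕ))) (hA : A ∈ M) (hAt : #A = t) (hB : B ∈ M) :
    A = B :=
  hanti.eq hA hB <| inter_eq_left.1 <|
    eq_of_subset_of_card_le inter_subset_left (hAt.trans_le (hM A hA B hB))

-- A small member `N ⊄ A ∪ B` meets `A ∪ B` in exactly `A ∩ B`, so a member inside `A ∪ B` meets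
-- `N` inside `A ∩ B`.
lemma tIntersecting.forall_subset_union_or_forall_inter_subset (hM : tIntersecting t M)
    (hA : A ∈ M) (hB : B ∈ M) (hAB : #(A ∩ B) = t) :
    (∀ N ∈ M, #N ≤ t + 1 → N ⊆ A ∪ B) ∨ ∀ N ∈ M, #N ≤ t + 1 → A ∩ B ⊆ N := by
  have inter_union_eq : ∀ N ∈ M, #N ≤ t + 1 → ¬ N ⊆ A ∪ B → N ∩ (A ∪ B) = A ∩ B := by
    intro N hN hNt hNAB
    have hlt : #(N ∩ (A ∪ B)) < #N :=
      card_lt_card (inter_subset_left.ssubset_of_ne fun h => hNAB (inter_eq_left.1 h))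
    have hNA : N ∩ A = N ∩ (A ∪ B) := eq_of_subset_of_card_le
      (inter_subset_inter_left subset_union_left) (by have := hM N hN A hA; omega)
    have hNB : N ∩ B = N ∩ (A ∪ B) := eq_of_subset_of_card_le
      (inter_subset_inter_left subset_union_right) (by have := hM N hN B hB; omega)
    refine eq_of_subset_of_card_le (subset_inter ?_ ?_) ?_
    · exact hNA ▸ inter_subset_right
    · exact hNB ▸ inter_subset_right
    · rw [hAB, ← hNA]; exact hM N hN A hA
  by_contra! h
  obtain ⟨⟨N, hN, hNt, hNAB⟩, L, hL, hLt, hLAB⟩ := h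
  by_cases hLsub : L ⊆ A ∪ B
  · have hLN : L ∩ N ⊆ A ∩ B := by
      rw [← inter_union_eq N hN hNt hNAB, inter_comm]
      exact inter_subset_inter_left hLsub
    rw [← eq_of_subset_of_card_le hLN (hAB.trans_le (hM L hL N hN))] at hLAB
    exact hLAB inter_subset_left
  · exact hLAB (inter_union_eq L hL hLt hLsub ▸ inter_subset_left)

-- A `t`-subset `E` of `Z` lies in only two `(t + 1)`-subsets of `Z`, one of which is `T ∉ M`.
lemma notMem_smallMeets_of_subset {E : Finset ℕ} (hZ : #Z = t + 2)
    (hM : ∀ A ∈ M, #A ≤ t + 1 → A ⊆ Z ∧ #A = t + 1) (hT : T ∈ powersetCard (t + 1) Z)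
    (hTM : T ∉ M) (hET : E ⊆ T) : E ∉ smallMeets t M := by
  intro hE
  obtain ⟨A, hA, hAt, B, hB, hBt, rfl, hcard⟩ := mem_smallMeets.1 hE
  obtain ⟨hAZ, hAt⟩ := hM A hA hAt
  obtain ⟨hBZ, hBt⟩ := hM B hB hBt
  obtain ⟨hTZ, hTt⟩ := mem_powersetCard.1 hT
  have hAB : A ∪ B = Z := eq_of_subset_of_card_le (union_subset hAZ hBZ) <| by
    have := card_union_add_card_inter A B; omega
  obtain ⟨z, hzT, hzE⟩ := exists_mem_notMem_of_card_lt_card (show #(A ∩ B) < #T by omega)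
  have hins : insert z (A ∩ B) = T :=
    eq_of_subset_of_card_le (insert_subset hzT hET) (by rw [card_insert_of_notMem hzE]; omega)
  rcases mem_union.1 (hAB.symm ▸ hTZ hzT : z ∈ A ∪ B) with hz | hz
  · have : T = A := eq_of_subset_of_card_le
      (hins ▸ insert_subset hz inter_subset_left) (by omega)
    exact hTM (this ▸ hA)
  · have : T = B := eq_of_subset_of_card_le
      (hins ▸ insert_subset hz inter_subset_right) (by omega)
    exact hTM (this ▸ hB)

lemma card_smallMeets_lt (hZ : #Z = t + 2) (hM : ∀ A ∈ M, #A ≤ t + 1 → A ⊆ Z ∧ #A = t + 1)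
    (hZM : ¬ powersetCard (t + 1) Z ⊆ M) : #(smallMeets t M) < (t + 2).choose 2 := by
  obtain ⟨T, hT, hTM⟩ := not_subset.1 hZM
  obtain ⟨hTZ, hTt⟩ := mem_powersetCard.1 hT
  obtain ⟨E, hET, hEt⟩ := exists_subset_card_eq (show t ≤ #T by omega)
  have hss : smallMeets t M ⊂ powersetCard t Z := by
    refine (ssubset_iff_of_subset fun D hD => ?_).2
      ⟨E, mem_powersetCard.2 ⟨hET.trans hTZ, hEt⟩, notMem_smallMeets_of_subset hZ hM hT hTM hET⟩
    obtain ⟨A, hA, hAt, B, -, -, rfl, hcard⟩ := mem_smallMeets.1 hD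
    exact mem_powersetCard.2 ⟨inter_subset_left.trans (hM A hA hAt).1, hcard⟩
  have := card_lt_card hss
  rwa [card_powersetCard, hZ, Nat.choose_symm_add] at this

lemma tIntersecting.card_smallMeets_lt_or_exists (ht : 1 ≤ t) (hM : tIntersecting t M)
    (hanti : IsAntichain (· ⊆ ·) (M : Set (Finset ℕ))) :
    #(smallMeets t M) < (t + 2).choose 2 ∨
      ∃ A ∈ M, ∃ B ∈ M, #(A ∪ B) = t + 2 ∧ powersetCard (t + 1) (A ∪ B) ⊆ M := by
  have one_lt_choose : 1 < (t + 2).choose 2 :=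
    lt_of_lt_of_le (by decide) (Nat.choose_le_choose 2 (show 3 ≤ t + 2 by omega))
  have few {D : Finset ℕ} (h : smallMeets t M ⊆ {D}) : #(smallMeets t M) < (t + 2).choose 2 :=
    (card_le_card h).trans_lt (by rwa [card_singleton])
  obtain hnone | ⟨D, hD⟩ := (smallMeets t M).eq_empty_or_nonempty
  · exact .inl (few (hnone ▸ empty_subset {∅}))
  obtain ⟨A, hA, hAt, B, hB, hBt, rfl, hAB⟩ := mem_smallMeets.1 hD
  by_cases hmin : ∃ N ∈ M, #N = t
  · obtain ⟨N, hN, hNt⟩ := hmin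
    exact .inl (few (smallMeets_subset_singleton hNt fun L hL _ =>
      (hM.eq_of_card_eq hanti hN hNt hL).subset))
  have card_eq : ∀ N ∈ M, #N ≤ t + 1 → #N = t + 1 := fun N hN hNt => by
    have : t ≤ #N := by simpa using hM N hN N hN
    have : #N ≠ t := fun h => hmin ⟨N, hN, h⟩
    omega
  have hunion : #(A ∪ B) = t + 2 := by
    have := card_union_add_card_inter A B
    have := card_eq A hA hAt
    have := card_eq B hB hBt
    omega
  rcases hM.forall_subset_union_or_forall_inter_subset hA hB hAB with hsub | hsub
  · by_cases hfull : powersetCard (t + 1) (A ∪ B) ⊆ M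
    · exact .inr ⟨A, hA, B, hB, hunion, hfull⟩
    · exact .inl (card_smallMeets_lt hunion
        (fun N hN hNt => ⟨hsub N hN hNt, card_eq N hN hNt⟩) hfull)
  · exact .inl (few (smallMeets_subset_singleton hAB hsub))

end SmallMeets

section UpperBound

variable {m q t : ℕ} {A B I L N U : Finset ℕ} {F F' M : Finset (Finset ℕ)}

lemma mem_interFam : I ∈ interFam F ↔ ∃ A ∈ F, ∃ B ∈ F, A ≠ B ∧ A ∩ B = I := by
  simp only [interFam, mem_image, mem_filter, mem_product, Prod.exists]
  grind

lemma interFam_mono (h : F' ⊆ F) : interFam F' ⊆ interFam F := fun _ hI => by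
  obtain ⟨A, hA, B, hB, hne, hAB⟩ := mem_interFam.1 hI
  exact mem_interFam.2 ⟨A, h hA, B, h hB, hne, hAB⟩

lemma card_inter_lt_of_ne {k : ℕ} (hA : #A = k) (hB : #B = k) (hne : A ≠ B) : #(A ∩ B) < k := by
  refine hA ▸ card_lt_card (inter_subset_left.ssubset_of_ne fun h => hne ?_)
  exact eq_of_subset_of_card_le (inter_eq_left.1 h) (hB.trans hA.symm).le

lemma card_sdiff_lt_of_subset (hIA : I ⊆ A) (hNA : N ⊆ A) (hA : #A < m + #N) :
    #(I \ N) < m := by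
  have := card_le_card (sdiff_subset_sdiff hIA (Subset.refl N))
  have := card_sdiff_add_card_eq_card hNA
  omega

lemma exists_smallMeets_or_exists_card_sdiff_lt (hM : tIntersecting t M) (hN : N ∈ M) (hL : L ∈ M)
    (hNA : N ⊆ A) (hLB : L ⊆ B) (hA : #A = m + t + 1) (hB : #B = m + t + 1) (hne : A ≠ B) :
    (∃ D ∈ smallMeets t M, D ⊆ A ∩ B ∧ #((A ∩ B) \ D) < m + 1) ∨
      ∃ D ∈ M, #((A ∩ B) \ D) < m := by
  have hI := card_inter_lt_of_ne hA hB hne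
  have hNL : t ≤ #(N ∩ L) := hM N hN L hL
  have hNLI : N ∩ L ⊆ A ∩ B := inter_subset_inter hNA hLB
  by_cases hNt : t + 2 ≤ #N
  · exact .inr ⟨N, hN, card_sdiff_lt_of_subset inter_subset_left hNA (by omega)⟩
  by_cases hLt : t + 2 ≤ #L
  · exact .inr ⟨L, hL, card_sdiff_lt_of_subset inter_subset_right hLB (by omega)⟩
  by_cases ht : #(N ∩ L) = t
  · exact .inl ⟨N ∩ L, mem_smallMeets.2 ⟨N, hN, by omega, L, hL, by omega, rfl, ht⟩, hNLI,
      card_sdiff_lt_of_subset Subset.rfl hNLI (by omega)⟩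
  · have hNI : N ⊆ A ∩ B := by
      rwa [eq_of_subset_of_card_le (inter_subset_left : N ∩ L ⊆ N) (by omega)] at hNLI
    have : #(N ∩ L) ≤ #N := card_le_card inter_subset_left
    exact .inr ⟨N, hN, card_sdiff_lt_of_subset Subset.rfl hNI (by omega)⟩

lemma card_interFam_le (hF : F ⊆ powersetCard (m + t + 1) U) (hF' : F' ⊆ F)
    (hM : tIntersecting t M) (hMq : ∀ N ∈ M, #N ≤ q)
    (hcover : ∀ A ∈ F \ F', ∃ N ∈ M, N ⊆ A) :
    #(interFam F) ≤ #(smallMeets t M) * #(powersetCardLT (m + 1) U) +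
      ((#M + 1) * 2 ^ q * #(powersetCardLT m U) + (m + t + 2) ^ (t + 1) * #F') := by
  have cover : interFam F ⊆
      {I ∈ U.powerset | ∃ D ∈ smallMeets t M, D ⊆ I ∧ #(I \ D) < m + 1} ∪
        ({I ∈ U.powerset | ∃ D ∈ insert ∅ M, #(I \ D) < m} ∪ shadowLE (t + 1) F') := by
    intro I hI
    simp only [mem_union, mem_filter, mem_powerset, exists_mem_insert, sdiff_empty]
    obtain ⟨A, hA, B, hB, hne, rfl⟩ := mem_interFam.1 hI
    obtain ⟨hAU, hAk⟩ := mem_powersetCard.1 (hF hA)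
    obtain ⟨-, hBk⟩ := mem_powersetCard.1 (hF hB)
    have hIU : A ∩ B ⊆ U := inter_subset_left.trans hAU
    have shadow {E : Finset ℕ} (hE : E ∈ F') (hEk : #E = m + t + 1) (h : A ∩ B ⊆ E) :
        #(A ∩ B) < m ∨ A ∩ B ∈ shadowLE (t + 1) F' :=
      (lt_or_ge _ _).imp_right fun h' => mem_shadowLE.2 ⟨E, hE, h, by omega⟩
    by_cases hAF' : A ∈ F'
    · have := shadow hAF' hAk inter_subset_left
      tauto
    by_cases hBF' : B ∈ F'
    · have := shadow hBF' hBk inter_subset_right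
      tauto
    obtain ⟨N, hN, hNA⟩ := hcover A (mem_sdiff.2 ⟨hA, hAF'⟩)
    obtain ⟨L, hL, hLB⟩ := hcover B (mem_sdiff.2 ⟨hB, hBF'⟩)
    exact (exists_smallMeets_or_exists_card_sdiff_lt hM hN hL hNA hLB hAk hBk hne).imp
      (fun h => ⟨hIU, h⟩) fun h => .inl ⟨hIU, .inr h⟩
  refine (card_le_card cover).trans ((card_union_le _ _).trans (add_le_add
    (card_filter_superset_sdiff_le _ _ _) ((card_union_le _ _).trans (add_le_add ?_ ?_))))
  · refine (card_filter_sdiff_le U (q := q) (by simpa using hMq) m).trans ?_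
    gcongr
    exact card_insert_le ∅ M
  · exact card_shadowLE_le (fun A hA => (mem_powersetCard.1 (hF (hF' hA))).2) (t + 1)

end UpperBound

section FranklFamily

/-- The Frankl family of the `k`-subsets of `U` with at least `t + 1` elements in `Z`; the family
`𝓐_t` is the case `U = {1, …, n}`, `Z = {1, …, t + 2}`. -/
def franklFamily (U Z : Finset ℕ) (k t : ℕ) : Finset (Finset ℕ) :=
  {A ∈ powersetCard k U | t + 1 ≤ #(A ∩ Z)}

variable {k m t v w : ℕ} {A S U W Z : Finset ℕ}

lemma mem_franklFamily : A ∈ franklFamily U Z k t ↔ (A ⊆ U ∧ #A = k) ∧ t + 1 ≤ #(A ∩ Z) := by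
  rw [franklFamily, mem_filter, mem_powersetCard]

lemma erase_union_mem_franklFamily (hZU : Z ⊆ U) (hZ : #Z = t + 2) (hv : v ∈ Z)
    (hS : S ∈ powersetCard m (U \ Z)) : Z.erase v ∪ S ∈ franklFamily U Z (m + t + 1) t := by
  obtain ⟨hSU, hSm⟩ := mem_powersetCard.1 hS
  have hcard : #(Z.erase v) = t + 1 := by rw [card_erase_of_mem hv, hZ]; rfl
  have hdisj : Disjoint (Z.erase v) S :=
    (disjoint_sdiff.mono_left (erase_subset v Z)).mono_right hSU
  refine mem_franklFamily.2 ⟨⟨union_subset ((erase_subset v Z).trans hZU)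
    (hSU.trans sdiff_subset), ?_⟩, ?_⟩
  · rw [card_union_of_disjoint hdisj, hcard, hSm]; ring
  · exact hcard.ge.trans (card_le_card (subset_inter subset_union_left (erase_subset v Z)))

lemma sdiff_pair_union_mem_interFam (hZU : Z ⊆ U) (hZ : #Z = t + 2) (hv : v ∈ Z) (hw : w ∈ Z)
    (hvw : v ≠ w) (hS : S ∈ powersetCard m (U \ Z)) :
    Z \ {v, w} ∪ S ∈ interFam (franklFamily U Z (m + t + 1) t) := by
  refine mem_interFam.2 ⟨_, erase_union_mem_franklFamily hZU hZ hv hS, _,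
    erase_union_mem_franklFamily hZU hZ hw hS, fun h => ?_, ?_⟩
  · have hwS : w ∉ S := fun h => (mem_sdiff.1 ((mem_powersetCard.1 hS).1 h)).2 hw
    have hwv : w ∈ Z.erase v ∪ S := mem_union_left _ (mem_erase.2 ⟨hvw.symm, hw⟩)
    simp [h, hwS] at hwv
  · ext x
    simp only [mem_inter, mem_union, mem_erase, mem_sdiff, mem_insert, mem_singleton]
    tauto

lemma choose_mul_choose_le_card_interFam_franklFamily (hZU : Z ⊆ U) (hZ : #Z = t + 2) (m : ℕ) :
    (t + 2).choose 2 * (#U - (t + 2)).choose m ≤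
      #(interFam (franklFamily U Z (m + t + 1) t)) := by
  calc (t + 2).choose 2 * (#U - (t + 2)).choose m
      = #(powersetCard 2 Z ×ˢ powersetCard m (U \ Z)) := by
        rw [card_product, card_powersetCard, card_powersetCard, card_sdiff_of_subset hZU, hZ]
    _ ≤ _ := by
        refine card_le_card_of_injOn (fun p => Z \ p.1 ∪ p.2) ?_ ?_
        · rintro ⟨P, S⟩ hPS
          obtain ⟨hP, hS⟩ := mem_product.1 hPS
          obtain ⟨hPZ, hPcard⟩ := mem_powersetCard.1 hP
          obtain ⟨v, w, hvw, rfl⟩ := card_eq_two.1 hPcard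
          exact sdiff_pair_union_mem_interFam hZU hZ (hPZ (by simp)) (hPZ (by simp)) hvw hS
        · rintro ⟨P, S⟩ hPS ⟨P', S'⟩ hPS' h
          simp only [coe_product, Set.mem_prod, mem_coe, mem_powersetCard] at hPS hPS' h
          have recover {P S : Finset ℕ} (hP : P ⊆ Z) (hS : S ⊆ U \ Z) :
              Z \ (Z \ P ∪ S) = P ∧ (Z \ P ∪ S) \ Z = S := by
            constructor <;> grind
          obtain ⟨hP, hS⟩ := recover hPS.1.1 hPS.2.1
          obtain ⟨hP', hS'⟩ := recover hPS'.1.1 hPS'.2.1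
          exact Prod.ext (hP.symm.trans (h ▸ hP')) (hS.symm.trans (h ▸ hS'))

lemma interFam_image_perm (σ : Equiv.Perm ℕ) (F : Finset (Finset ℕ)) :
    interFam (F.image (image σ)) = (interFam F).image (image σ) := by
  ext I
  simp only [mem_interFam, mem_image, exists_exists_and_eq_and]
  constructor
  · rintro ⟨A, hA, B, hB, hne, rfl⟩
    exact ⟨A ∩ B, ⟨A, hA, B, hB, fun h => hne (h ▸ rfl), rfl⟩, image_inter _ _ σ.injective⟩
  · rintro ⟨_, ⟨A, hA, B, hB, hne, rfl⟩, rfl⟩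
    exact ⟨A, hA, B, hB, (image_injective σ.injective).ne hne, (image_inter _ _ σ.injective).symm⟩

lemma exists_perm_image_subset (hZ : Z ⊆ U) (hW : W ⊆ U) (h : #Z = #W) :
    ∃ σ : Equiv.Perm ℕ, U.image σ ⊆ U ∧ Z.image σ ⊆ W := by
  have card_eq {Z : Finset ℕ} (hZ : Z ⊆ U) : Fintype.card {x : U // (x : ℕ) ∈ Z} = #Z := by
    rw [← Fintype.card_coe Z]
    exact Fintype.card_congr ⟨fun x => ⟨x.1.1, x.2⟩, fun x => ⟨⟨x.1, hZ x.2⟩, x.2⟩,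
      fun _ => rfl, fun _ => rfl⟩
  let e : {x : U // (x : ℕ) ∈ Z} ≃ {x : U // (x : ℕ) ∈ W} :=
    Fintype.equivOfCardEq (by rw [card_eq hZ, card_eq hW, h])
  refine ⟨Equiv.Perm.ofSubtype e.extendSubtype, image_subset_iff.2 fun x hx => ?_,
    image_subset_iff.2 fun x hx => ?_⟩
  · rw [Equiv.Perm.ofSubtype_apply_of_mem _ hx]
    exact coe_mem _
  · rw [Equiv.Perm.ofSubtype_apply_of_mem _ (hZ hx)]
    exact e.extendSubtype_mem ⟨x, hZ hx⟩ hx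

lemma card_interFam_franklFamily_le (hZ : Z ⊆ U) (hW : W ⊆ U) (h : #Z = #W) :
    #(interFam (franklFamily U Z k t)) ≤ #(interFam (franklFamily U W k t)) := by
  obtain ⟨σ, hσU, hσZ⟩ := exists_perm_image_subset hZ hW h
  rw [← card_image_of_injective _ (image_injective σ.injective), ← interFam_image_perm]
  refine card_le_card (interFam_mono (image_subset_iff.2 fun A hA => ?_))
  obtain ⟨⟨hAU, hAk⟩, hAZ⟩ := mem_franklFamily.1 hA
  refine mem_franklFamily.2 ⟨⟨(image_subset_image hAU).trans hσU, ?_⟩, hAZ.trans ?_⟩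
  · rw [card_image_of_injective _ σ.injective, hAk]
  · rw [← card_image_of_injective (A ∩ Z) σ.injective, image_inter _ _ σ.injective]
    exact card_le_card (inter_subset_inter_left hσZ)

end FranklFamily

section MissingSets

variable {α : Type*} [DecidableEq α]

/-- The `m`-subsets of `V` that are disjoint from some member of `G`. -/
def missingSets (m : ℕ) (V : Finset α) (G : Finset (Finset α)) : Finset (Finset α) :=
  {S ∈ powersetCard m V | ∃ A ∈ G, Disjoint S A}

/-- The subsets of `V` with fewer than `m` elements that are contained in some member of `G`. -/
def lowShadow (m : ℕ) (V : Finset α) (G : Finset (Finset α)) : Finset (Finset α) :=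
  {S ∈ powersetCardLT m V | ∃ A ∈ G, S ⊆ A}

variable {R a m r t : ℕ} {A B S U V W Z : Finset α} {G H : Finset (Finset α)}

lemma mem_missingSets :
    S ∈ missingSets m V G ↔ S ∈ powersetCard m V ∧ ∃ A ∈ G, Disjoint S A :=
  mem_filter

lemma mem_lowShadow : S ∈ lowShadow m V G ↔ S ∈ powersetCardLT m V ∧ ∃ A ∈ G, S ⊆ A :=
  mem_filter

lemma missingSets_mono (h : G ⊆ H) : missingSets m V G ⊆ missingSets m V H := fun _ hS => by
  obtain ⟨hS, A, hA, hSA⟩ := mem_missingSets.1 hS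
  exact mem_missingSets.2 ⟨hS, A, h hA, hSA⟩

lemma choose_le_card_filter_disjoint_missingSets (hA : A ∈ G) :
    (#V - #A).choose m ≤ #{T ∈ missingSets m V G | Disjoint T A} := by
  refine (Nat.choose_le_choose m (le_card_sdiff A V)).trans ?_
  rw [← card_powersetCard]
  refine card_le_card fun T hT => ?_
  obtain ⟨hTVA, hTm⟩ := mem_powersetCard.1 hT
  obtain ⟨hTV, hTA⟩ := subset_sdiff.1 hTVA
  exact mem_filter.2 ⟨mem_missingSets.2 ⟨mem_powersetCard.2 ⟨hTV, hTm⟩, A, hA, hTA⟩, hTA⟩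

-- Count the disjoint pairs of a set in the low shadow and a missing set.
lemma mul_card_lowShadow_le (hR : 2 ≤ R) (ha : 2 * a ≤ R) (hG : ∀ A ∈ G, #A ≤ m + a)
    (hV : R * m + (m + m + a) ≤ #V) : R * #(lowShadow m V G) ≤ 4 * #(missingSets m V G) := by
  set c := (#V - m - a).choose m
  have hcpos : 0 < c := Nat.choose_pos (by omega)
  have many : ∀ S ∈ lowShadow m V G,
      c ≤ #(bipartiteAbove (fun S T => Disjoint T S) (missingSets m V G) S) := fun S hS => by
    obtain ⟨-, A, hA, hSA⟩ := mem_lowShadow.1 hS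
    have := hG A hA
    calc c ≤ (#V - #A).choose m := Nat.choose_le_choose m (by omega)
      _ ≤ #{T ∈ missingSets m V G | Disjoint T A} :=
          choose_le_card_filter_disjoint_missingSets hA
      _ ≤ _ := card_le_card (monotone_filter_right _ fun _ _ hTA => hTA.mono_right hSA)
  have few : ∀ T ∈ missingSets m V G,
      #(bipartiteBelow (fun S T => Disjoint T S) (lowShadow m V G) T) ≤ 4 * c / R := fun T hT => by
    obtain ⟨hTV, hTm⟩ := mem_powersetCard.1 (mem_missingSets.1 hT).1
    have hVT : #(V \ T) = #V - m := by rw [card_sdiff_of_subset hTV, hTm]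
    have hsub : bipartiteBelow (fun S T => Disjoint T S) (lowShadow m V G) T ⊆
        powersetCardLT m (V \ T) := fun S hS => by
      obtain ⟨hS, hTS⟩ := (mem_bipartiteBelow _).1 hS
      obtain ⟨hSV, hSm⟩ := mem_powersetCardLT.1 (mem_lowShadow.1 hS).1
      exact mem_powersetCardLT.2 ⟨subset_sdiff.2 ⟨hSV, hTS.symm⟩, hSm⟩
    rw [Nat.le_div_iff_mul_le (by omega), mul_comm]
    calc R * _ ≤ R * #(powersetCardLT m (V \ T)) := by gcongr
      _ ≤ 2 * (#V - m).choose m := hVT ▸ mul_card_powersetCardLT_le hR (by omega)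
      _ ≤ 2 * (2 * c) := by
          gcongr
          exact choose_le_two_mul_choose_sub (by omega) ha (by omega) (by omega)
      _ = 4 * c := by ring
  refine Nat.le_of_mul_le_mul_right ?_ hcpos
  calc R * #(lowShadow m V G) * c ≤ R * (#(missingSets m V G) * (4 * c / R)) := by
        rw [mul_assoc]; exact Nat.mul_le_mul_left R (card_mul_le_card_mul _ many few)
    _ = #(missingSets m V G) * (R * (4 * c / R)) := by ring
    _ ≤ #(missingSets m V G) * (4 * c) := Nat.mul_le_mul_left _ (Nat.mul_div_le _ _)
    _ = 4 * #(missingSets m V G) * c := by ring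

lemma isSpread_powersetCard (hW : R * m ≤ #W) :
    IsSpread R ((#W).choose m) (powersetCard m W) (fun S => S) := by
  intro Y
  obtain hnone | ⟨S, hS⟩ := {S ∈ powersetCard m W | Y ⊆ S}.eq_empty_or_nonempty
  · simp [hnone]
  obtain ⟨hS, hYS⟩ := mem_filter.1 hS
  obtain ⟨hSW, hSm⟩ := mem_powersetCard.1 hS
  obtain ⟨i, hi⟩ := Nat.exists_eq_add_of_le' (card_le_card hYS)
  obtain ⟨N, hN⟩ := Nat.exists_eq_add_of_le' (card_le_card (hYS.trans hSW))
  calc R ^ #Y * #{S ∈ powersetCard m W | Y ⊆ S}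
      ≤ R ^ #Y * (#W - #Y).choose (m - #Y) := by
        gcongr; exact card_filter_superset_le Subset.rfl (hYS.trans hSW)
    _ = R ^ #Y * N.choose i := by
        rw [hN, ← hSm, hi, Nat.add_sub_cancel, Nat.add_sub_cancel]
    _ ≤ (#W).choose m := by
        rw [hN, ← hSm, hi]
        exact pow_mul_choose_le_add_choose_add (by rwa [← hN, ← hi, hSm])

-- Otherwise at least half of the `m`-subsets of `V \ B` meet every member of `G`, and they would
-- form a spread family.
lemma IsSpreadOver.choose_le_two_mul_card_missingSets (hG : IsSpreadOver R B G)
    (hR : 64 * (r + 1) ^ 4 ≤ R) (hGr : ∀ A ∈ G, #A < 2 ^ r) (hmr : m < 2 ^ r)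
    (hV : R * m ≤ #(V \ B)) : (#(V \ B)).choose m ≤ 2 * #(missingSets m V G) := by
  by_contra! h
  have hsplit := card_filter_add_card_filter_not (s := powersetCard m (V \ B))
    (· ∈ missingSets m V G)
  have hmissing : #{S ∈ powersetCard m (V \ B) | S ∈ missingSets m V G} ≤ #(missingSets m V G) :=
    card_le_card fun S hS => (mem_filter.1 hS).2
  rw [card_powersetCard] at hsplit
  obtain ⟨A, hA, S, hS, hAS⟩ := hG.isSpread.exists_disjoint
    ((isSpread_powersetCard hV).mono (filter_subset (· ∉ missingSets m V G) _)
      fun _ _ => Subset.rfl)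
    hR hG.nonempty.card_pos (Nat.zero_lt_of_lt h)
    (fun A hA => (card_le_card sdiff_subset).trans_lt (hGr A hA))
    (fun S hS => (mem_powersetCard.1 (mem_filter.1 hS).1).2.trans_lt hmr)
    (by omega) (by omega)
  obtain ⟨hS, hSmissing⟩ := mem_filter.1 hS
  obtain ⟨hSVB, hSm⟩ := mem_powersetCard.1 hS
  obtain ⟨hSV, hSB⟩ := subset_sdiff.1 hSVB
  refine hSmissing (mem_missingSets.2 ⟨mem_powersetCard.2 ⟨hSV, hSm⟩, A, hA, ?_⟩)
  rw [← sdiff_union_inter A B, disjoint_union_right]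
  exact ⟨hAS.symm, hSB.mono_right inter_subset_right⟩

lemma card_filter_exists_subset_le (hG : G ⊆ powersetCard (m + t + 1) U) (Z : Finset α) :
    #{I ∈ U.powerset | ∃ A ∈ G, I ⊆ A} ≤
      2 ^ #Z * ((m + t + 2) ^ (t + 1) * #G + #(lowShadow m (U \ Z) G)) := by
  have cover : {I ∈ U.powerset | ∃ A ∈ G, I ⊆ A} ⊆
      image₂ (· ∪ ·) Z.powerset (shadowLE (t + 1) G ∪ lowShadow m (U \ Z) G) := fun I hI => by
    obtain ⟨hIU, A, hA, hIA⟩ := by simpa only [mem_filter, mem_powerset] using hI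
    obtain ⟨-, hAk⟩ := mem_powersetCard.1 (hG hA)
    refine mem_image₂.2 ⟨I ∩ Z, mem_powerset.2 inter_subset_right, I \ Z, mem_union.2 ?_,
      (union_comm _ _).trans (sdiff_union_inter I Z)⟩
    refine (le_or_gt m #(I \ Z)).imp (fun h => ?_) fun h => ?_
    · exact mem_shadowLE.2 ⟨A, hA, sdiff_subset.trans hIA, by omega⟩
    · exact mem_lowShadow.2 ⟨mem_powersetCardLT.2 ⟨sdiff_subset_sdiff hIU Subset.rfl, h⟩, A, hA,
        sdiff_subset.trans hIA⟩
  refine (card_le_card cover).trans ((card_image₂_le ..).trans ?_)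
  rw [card_powerset]
  gcongr
  refine (card_union_le _ _).trans (Nat.add_le_add_right ?_ _)
  exact card_shadowLE_le (fun A hA => (mem_powersetCard.1 (hG hA)).2) (t + 1)

end MissingSets

section FullSupport

variable {b m n p r t R : ℕ} {A S U Z : Finset ℕ} {F G : Finset (Finset ℕ)}

lemma exists_card_inter_erase_lt (ht : 1 ≤ t) (hZ : Z.Nonempty) (hA : #(A ∩ Z) ≤ t) :
    ∃ v ∈ Z, #(A ∩ Z.erase v) < t := by
  obtain hdisj | ⟨v, hv⟩ := (A ∩ Z).eq_empty_or_nonempty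
  · obtain ⟨v, hv⟩ := hZ
    have : #(A ∩ Z.erase v) ≤ #(A ∩ Z) := card_le_card (inter_subset_inter_left (erase_subset v Z))
    rw [hdisj, card_empty] at this
    exact ⟨v, hv, by omega⟩
  · refine ⟨v, (mem_inter.1 hv).2, ?_⟩
    rw [inter_erase]
    exact (card_erase_lt_of_mem hv).trans_le hA

lemma exists_eq_erase_union_of_mem_franklFamily (hZ : #Z = t + 2)
    (hA : A ∈ franklFamily U Z (m + t + 1) t) (hS : S ∈ powersetCard m (U \ Z)) (hSA : S ⊆ A) :
    ∃ v ∈ Z, A = Z.erase v ∪ S := by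
  obtain ⟨⟨-, hAk⟩, hAZ⟩ := mem_franklFamily.1 hA
  obtain ⟨hSU, hSm⟩ := mem_powersetCard.1 hS
  have hSAZ : S ⊆ A \ Z := subset_sdiff.2 ⟨hSA, (subset_sdiff.1 hSU).2⟩
  have hsplit := card_inter_add_card_sdiff A Z
  have hS_le := card_le_card hSAZ
  have hAZS : S = A \ Z := eq_of_subset_of_card_le hSAZ (by omega)
  obtain ⟨v, hv⟩ : (Z \ A).Nonempty := by
    rw [sdiff_nonempty]
    intro h
    rw [inter_eq_right.2 h] at hsplit
    omega
  obtain ⟨hvZ, hvA⟩ := mem_sdiff.1 hv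
  have herase : A ∩ Z = Z.erase v := by
    refine eq_of_subset_of_card_le (subset_erase.2 ⟨inter_subset_right, by simp [hvA]⟩) ?_
    rw [card_erase_of_mem hvZ, hZ]
    exact hAZ
  refine ⟨v, hvZ, ?_⟩
  rw [← herase, hAZS, union_comm, sdiff_union_inter]

-- If `S` misses `A ∈ F` and `#(A ∩ Z.erase v) < t`, then `Z.erase v ∪ S` is not in `F`, so `F`
-- loses the intersection `Z \ {v, w} ∪ S` of `Z.erase v ∪ S` and `Z.erase w ∪ S`.
lemma exists_mem_interFam_sdiff_of_mem_missingSets (ht : 1 ≤ t) (hF : tIntersecting t F)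
    (hFU : F ⊆ powersetCard (m + t + 1) U) (hZU : Z ⊆ U) (hZ : #Z = t + 2)
    (hS : S ∈ missingSets m (U \ Z) (F \ franklFamily U Z (m + t + 1) t)) :
    ∃ I ∈ interFam (franklFamily U Z (m + t + 1) t) \
      interFam (F ∩ franklFamily U Z (m + t + 1) t), I \ Z = S := by
  obtain ⟨hS, A, hA, hSA⟩ := mem_missingSets.1 hS
  obtain ⟨hAF, hAfrankl⟩ := mem_sdiff.1 hA
  have hAZ : #(A ∩ Z) ≤ t := by
    by_contra! h
    exact hAfrankl (mem_franklFamily.2 ⟨mem_powersetCard.1 (hFU hAF), h⟩)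
  obtain ⟨v, hv, hAv⟩ := exists_card_inter_erase_lt ht (card_pos.1 (by omega)) hAZ
  obtain ⟨w, hw, hwv⟩ := exists_mem_ne (s := Z) (by omega) v
  have hvF : Z.erase v ∪ S ∉ F := fun h => by
    refine (hF A hAF _ h).not_gt ?_
    rwa [inter_union_distrib_left, disjoint_iff_inter_eq_empty.1 hSA.symm, union_empty]
  have eq_of_mem {E : Finset ℕ} (hE : E ∈ F ∩ franklFamily U Z (m + t + 1) t)
      (hIE : Z \ {v, w} ∪ S ⊆ E) : E = Z.erase w ∪ S := by
    obtain ⟨hEF, hE⟩ := mem_inter.1 hE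
    obtain ⟨u, hu, rfl⟩ :=
      exists_eq_erase_union_of_mem_franklFamily hZ hE hS (subset_union_right.trans hIE)
    have huS : u ∉ S := fun h => (mem_sdiff.1 ((mem_powersetCard.1 hS).1 h)).2 hu
    have huvw : u ∈ ({v, w} : Finset ℕ) := by
      by_contra h
      have := hIE (mem_union_left S (mem_sdiff.2 ⟨hu, h⟩))
      simp [huS] at this
    obtain rfl | rfl : u = v ∨ u = w := by simpa using huvw
    exacts [absurd hEF hvF, rfl]
  refine ⟨_, mem_sdiff.2 ⟨sdiff_pair_union_mem_interFam hZU hZ hv hw hwv.symm hS, fun h => ?_⟩, ?_⟩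
  · obtain ⟨E, hE, E', hE', hne, hI⟩ := mem_interFam.1 h
    exact hne ((eq_of_mem hE (hI ▸ inter_subset_left)).trans
      (eq_of_mem hE' (hI ▸ inter_subset_right)).symm)
  · have hSZ := (subset_sdiff.1 (mem_powersetCard.1 hS).1).2
    rw [union_sdiff_distrib, sdiff_eq_self_of_disjoint hSZ,
      sdiff_eq_empty_iff_subset.2 sdiff_subset, empty_union]

lemma card_interFam_inter_add_card_missingSets_le (ht : 1 ≤ t) (hF : tIntersecting t F)
    (hFU : F ⊆ powersetCard (m + t + 1) U) (hZU : Z ⊆ U) (hZ : #Z = t + 2) :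
    #(interFam (F ∩ franklFamily U Z (m + t + 1) t)) +
        #(missingSets m (U \ Z) (F \ franklFamily U Z (m + t + 1) t)) ≤
      #(interFam (franklFamily U Z (m + t + 1) t)) := by
  have hlost : missingSets m (U \ Z) (F \ franklFamily U Z (m + t + 1) t) ⊆
      (interFam (franklFamily U Z (m + t + 1) t) \
        interFam (F ∩ franklFamily U Z (m + t + 1) t)).image (· \ Z) := fun S hS =>
    mem_image.2 (exists_mem_interFam_sdiff_of_mem_missingSets ht hF hFU hZU hZ hS)
  have := (card_le_card hlost).trans card_image_le
  rw [card_sdiff_of_subset (interFam_mono inter_subset_right)] at this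
  have := card_le_card (interFam_mono
    (inter_subset_right : F ∩ franklFamily U Z (m + t + 1) t ⊆ franklFamily U Z (m + t + 1) t))
  omega

lemma card_interFam_le_card_interFam_inter_add (hFU : F ⊆ powersetCard (m + t + 1) U)
    (E : Finset (Finset ℕ)) (Z : Finset ℕ) :
    #(interFam F) ≤ #(interFam (F ∩ E)) +
      2 ^ #Z * ((m + t + 2) ^ (t + 1) * #(F \ E) + #(lowShadow m (U \ Z) (F \ E))) := by
  have cover : interFam F ⊆ interFam (F ∩ E) ∪ {I ∈ U.powerset | ∃ A ∈ F \ E, I ⊆ A} := by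
    intro I hI
    obtain ⟨A, hA, B, hB, hne, rfl⟩ := mem_interFam.1 hI
    have hIU : A ∩ B ∈ U.powerset :=
      mem_powerset.2 (inter_subset_left.trans (mem_powersetCard.1 (hFU hA)).1)
    by_cases hAE : A ∈ E
    · by_cases hBE : B ∈ E
      · exact mem_union_left _
          (mem_interFam.2 ⟨A, mem_inter.2 ⟨hA, hAE⟩, B, mem_inter.2 ⟨hB, hBE⟩, hne, rfl⟩)
      · exact mem_union_right _
          (mem_filter.2 ⟨hIU, B, mem_sdiff.2 ⟨hB, hBE⟩, inter_subset_right⟩)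
    · exact mem_union_right _ (mem_filter.2 ⟨hIU, A, mem_sdiff.2 ⟨hA, hAE⟩, inter_subset_left⟩)
  refine (card_le_card cover).trans ((card_union_le _ _).trans (Nat.add_le_add_left ?_ _))
  exact card_filter_exists_subset_le (sdiff_subset.trans hFU) Z

lemma mul_add_le_two_mul_sq_mul {a : ℕ} (hR : 4 ≤ R) (hm : m ≤ a) :
    R * m + 4 * a ≤ 2 * R ^ 2 * a := by
  calc R * m + 4 * a ≤ R * a + R * a := by gcongr
    _ = 2 * (R * 1) * a := by ring
    _ ≤ 2 * (R * R) * a := by gcongr; omega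
    _ = 2 * R ^ 2 * a := by ring

-- Here `t + 1` of the `b` factors `R ^ 2` gained by passing from `m + t + 1 - b` to `m` elements
-- are missing; they and the prefactor are paid for by `b` being large.
lemma mul_pow_mul_choose_le_choose_sub (hRt : 2 ^ (t + 5) ≤ R) (hn : 2 * R ^ 2 * (m + t + 1) ≤ n)
    (hp : 2 ≤ p) (hnR : n ≤ R ^ p) (hb : 2 * p * (t + 1) < b) (hbk : b ≤ m + t + 1) :
    2 ^ (t + 4) * (m + t + 2) ^ (t + 1) * (R ^ b * (n - b).choose (m + t + 1 - b)) ≤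
      (n - b - (t + 2)).choose m := by
  have hR4 : 4 ≤ R := (Nat.pow_le_pow_right two_pos (by omega : 2 ≤ t + 5)).trans hRt
  have htR : 2 * (t + 2) ≤ R ^ 2 := by
    have := (Nat.lt_two_pow_self (n := t + 5)).trans_le hRt
    nlinarith
  have hmn : R ^ 2 * m + m + (m + t + 1) + (t + 2) ≤ n := by nlinarith
  obtain ⟨j, rfl⟩ : ∃ j, b = j + (t + 1) := Nat.exists_eq_add_of_le' (by nlinarith)
  obtain ⟨i, rfl⟩ : ∃ i, m = i + j := Nat.exists_eq_add_of_le' (by omega)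
  have hi : i + j + t + 1 - (j + (t + 1)) = i := by omega
  have hexp : 1 + p * (t + 1) + (j + (t + 1)) ≤ 2 * j := by nlinarith
  have hk : i + j + t + 2 ≤ R ^ p := le_trans (by nlinarith) hnR
  set N := n - (j + (t + 1))
  refine Nat.le_of_mul_le_mul_left ?_ two_pos
  rw [hi]
  calc 2 * (2 ^ (t + 4) * (i + j + t + 2) ^ (t + 1) * (R ^ (j + (t + 1)) * N.choose i))
      = 2 ^ (t + 5) * (i + j + t + 2) ^ (t + 1) * R ^ (j + (t + 1)) * N.choose i := by ring
    _ ≤ R * (R ^ p) ^ (t + 1) * R ^ (j + (t + 1)) * N.choose i := by gcongr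
    _ = R ^ (1 + p * (t + 1) + (j + (t + 1))) * N.choose i := by ring
    _ ≤ R ^ (2 * j) * N.choose i := by gcongr; omega
    _ = (R ^ 2) ^ j * N.choose i := by rw [pow_mul]
    _ ≤ N.choose (i + j) := pow_mul_choose_le_choose_add (by omega)
    _ ≤ 2 * (N - (t + 2)).choose (i + j) :=
        choose_le_two_mul_choose_sub (by positivity) htR (by omega) (by omega)

lemma mul_card_le_card_missingSets_of_kernels_not_subset (hFU : F ⊆ powersetCard (m + t + 1) U)
    (hGF : G ⊆ F) (hG : G.Nonempty) (hZU : Z ⊆ U) (hZ : #Z = t + 2) (hRt : 2 ^ (t + 5) ≤ R)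
    (hn : 2 * R ^ 2 * (m + t + 1) ≤ #U) (hp : 2 ≤ p) (hnR : #U ≤ R ^ p)
    (hRr : 64 * (r + 1) ^ 4 ≤ R) (hr : m + t + 1 < 2 ^ r)
    (hno : ∀ A ∈ G, ∀ B ∈ kernels R (2 * p * (t + 1)) F, ¬B ⊆ A) :
    2 * (2 ^ (t + 2) * ((m + t + 2) ^ (t + 1) * #G)) ≤ #(missingSets m (U \ Z) G) := by
  obtain ⟨B, hqB, hBk, hspread, hGcard⟩ :=
    exists_isSpreadOver_of_kernels_not_subset hFU hGF hG hno
  have hR4 : 4 ≤ R := (Nat.pow_le_pow_right two_pos (by omega : 2 ≤ t + 5)).trans hRt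
  have hRm := (mul_add_le_two_mul_sq_mul hR4 (by omega : m ≤ m + t + 1)).trans hn
  have hUZB : #U - #B - (t + 2) ≤ #((U \ Z) \ B) := by
    have := le_card_sdiff B (U \ Z)
    rw [card_sdiff_of_subset hZU] at this
    omega
  have hGr : ∀ A ∈ {A ∈ G | B ⊆ A}, #A < 2 ^ r := fun A hA =>
    (mem_powersetCard.1 (hFU (hGF (mem_filter.1 hA).1))).2.trans_lt hr
  refine Nat.le_of_mul_le_mul_left ?_ two_pos
  calc 2 * (2 * (2 ^ (t + 2) * ((m + t + 2) ^ (t + 1) * #G)))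
      = 2 ^ (t + 4) * (m + t + 2) ^ (t + 1) * #G := by ring
    _ ≤ _ := Nat.mul_le_mul_left _ hGcard
    _ ≤ (#U - #B - (t + 2)).choose m := mul_pow_mul_choose_le_choose_sub hRt hn hp hnR hqB hBk
    _ ≤ (#((U \ Z) \ B)).choose m := Nat.choose_le_choose m hUZB
    _ ≤ 2 * #(missingSets m (U \ Z) {A ∈ G | B ⊆ A}) :=
        hspread.choose_le_two_mul_card_missingSets hRr hGr (by omega) (by omega)
    _ ≤ 2 * #(missingSets m (U \ Z) G) := by
        gcongr; exact missingSets_mono (filter_subset _ G)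

theorem card_interFam_le_card_interFam_franklFamily_of_kernels (ht : 1 ≤ t)
    (hF : tIntersecting t F) (hFU : F ⊆ powersetCard (m + t + 1) U) (hZU : Z ⊆ U)
    (hZ : #Z = t + 2) (hRt : 2 ^ (t + 5) ≤ R) (hn : 2 * R ^ 2 * (m + t + 1) ≤ #U) (hp : 2 ≤ p)
    (hnR : #U ≤ R ^ p) (hRr : 64 * (r + 1) ^ 4 ≤ R) (hr : m + t + 1 < 2 ^ r)
    (hker : ∀ B ∈ kernels R (2 * p * (t + 1)) F, t + 1 ≤ #(B ∩ Z)) :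
    #(interFam F) ≤ #(interFam (franklFamily U Z (m + t + 1) t)) := by
  have hloss := card_interFam_inter_add_card_missingSets_le ht hF hFU hZU hZ
  have hgain := card_interFam_le_card_interFam_inter_add hFU (franklFamily U Z (m + t + 1) t) Z
  rw [hZ, mul_add] at hgain
  set 𝓐 := franklFamily U Z (m + t + 1) t
  set G := F \ 𝓐
  have hG_card : ∀ A ∈ G, #A = m + t + 1 := fun A hA =>
    (mem_powersetCard.1 (hFU (sdiff_subset hA))).2
  obtain hGempty | hG := G.eq_empty_or_nonempty
  · exact card_le_card (interFam_mono (sdiff_eq_empty_iff_subset.1 hGempty))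
  have hno : ∀ A ∈ G, ∀ B ∈ kernels R (2 * p * (t + 1)) F, ¬B ⊆ A := fun A hA B hB hBA => by
    obtain ⟨hAF, hA⟩ := mem_sdiff.1 hA
    exact hA (mem_franklFamily.2 ⟨mem_powersetCard.1 (hFU hAF),
      (hker B hB).trans (card_le_card (inter_subset_inter_right hBA))⟩)
  have hlarge : 2 * (2 ^ (t + 2) * ((m + t + 2) ^ (t + 1) * #G)) ≤ #(missingSets m (U \ Z) G) :=
    mul_card_le_card_missingSets_of_kernels_not_subset hFU sdiff_subset hG hZU hZ
      hRt hn hp hnR hRr hr hno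
  have hR4 : 4 ≤ R := (Nat.pow_le_pow_right two_pos (by omega : 2 ≤ t + 5)).trans hRt
  have htR : 2 * (t + 4) < R := by
    have := Nat.lt_two_pow_self (n := t + 4)
    rw [pow_succ] at hRt
    omega
  have hRm := (mul_add_le_two_mul_sq_mul hR4 (by omega : m ≤ m + t + 1)).trans hn
  have hlow : 2 * (2 ^ (t + 2) * #(lowShadow m (U \ Z) G)) ≤ #(missingSets m (U \ Z) G) := by
    refine Nat.le_of_mul_le_mul_left ?_ (show 0 < 4 by norm_num)
    calc 4 * (2 * (2 ^ (t + 2) * #(lowShadow m (U \ Z) G)))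
        = 2 ^ (t + 5) * #(lowShadow m (U \ Z) G) := by ring
      _ ≤ R * #(lowShadow m (U \ Z) G) := by gcongr
      _ ≤ 4 * #(missingSets m (U \ Z) G) :=
          mul_card_lowShadow_le (a := t + 1) (by omega) (by omega) (fun A hA => (hG_card A hA).le)
            (by rw [card_sdiff_of_subset hZU]; omega)
  omega

end FullSupport

section Asymptotics

variable {H K P R b c d f m n p s t : ℕ}

lemma mul_add_mul_add_le_mul (hP : R * P ≤ 2 * c) (hf : R * f ≤ c) (hc : R * c ≤ R * H + s * c)
    (hd : d < b) (hR : 2 * b + 2 * K + 1 + b * s ≤ R) :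
    d * (P + c) + (K * P + f) ≤ b * H := by
  have hR0 : 0 < R := by omega
  refine Nat.le_of_mul_le_mul_left ?_ hR0
  suffices R * (d * (P + c) + (K * P + f)) + b * (s * c) ≤ R * (b * H) + b * (s * c) by omega
  calc R * (d * (P + c) + (K * P + f)) + b * (s * c)
      = (d + K) * (R * P) + R * f + b * s * c + d * (R * c) := by ring
    _ ≤ (b + K) * (2 * c) + c + b * s * c + d * (R * c) := by gcongr
    _ = (2 * b + 2 * K + 1 + b * s) * c + d * (R * c) := by ring
    _ ≤ R * c + d * (R * c) := by gcongr
    _ = (d + 1) * (R * c) := by ring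
    _ ≤ b * (R * H + s * c) := by gcongr; exact hd
    _ = R * (b * H) + b * (s * c) := by ring

lemma mul_pow_mul_le_choose (hR : 0 < R) (hm : m + t + 2 ≤ n) (hn : n ≤ R ^ p)
    (hf : R ^ (2 * p * (t + 1) + 1) * f ≤ n.choose (m + t + 1)) :
    R * ((m + t + 2) ^ (t + 1) * f) ≤ n.choose m := by
  refine Nat.le_of_mul_le_mul_left ?_ (Nat.pow_pos (n := 2 * p * (t + 1)) hR)
  calc R ^ (2 * p * (t + 1)) * (R * ((m + t + 2) ^ (t + 1) * f))
      = (m + t + 2) ^ (t + 1) * (R ^ (2 * p * (t + 1) + 1) * f) := by ring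
    _ ≤ (R ^ p) ^ (t + 1) * (n ^ (t + 1) * n.choose m) :=
        Nat.mul_le_mul (Nat.pow_le_pow_left (hm.trans hn) _)
          (hf.trans (choose_add_le_pow_mul_choose n m (t + 1)))
    _ ≤ (R ^ p) ^ (t + 1) * ((R ^ p) ^ (t + 1) * n.choose m) := by gcongr
    _ = R ^ (2 * p * (t + 1)) * n.choose m := by ring

lemma eventually_exists_pow_lt_two_pow (hp : p ≠ 0) :
    ∀ᶠ R : ℕ in Filter.atTop, ∃ r, 64 * (r + 1) ^ 4 ≤ R ∧ R ^ p < 2 ^ r := by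
  have hpow : ∀ᶠ L : ℕ in Filter.atTop, 64 * (3 * p) ^ 4 * L ^ 4 ≤ 2 ^ L := by
    have hlim := (tendsto_pow_const_div_const_pow_of_one_lt 4 (one_lt_two (α := ℝ))).const_mul
      (64 * (3 * p : ℝ) ^ 4)
    rw [mul_zero] at hlim
    filter_upwards [hlim.eventually_le_const one_pos] with L hL
    rw [← mul_div_assoc, div_le_one (by positivity)] at hL
    exact_mod_cast hL
  have hlog : Filter.Tendsto (Nat.log 2) Filter.atTop Filter.atTop :=
    Filter.tendsto_atTop_atTop.2 fun L => ⟨2 ^ L, fun R hR =>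
      Nat.le_log_of_pow_le one_lt_two hR⟩
  filter_upwards [hlog.eventually hpow, hlog.eventually_ge_atTop 1, Filter.eventually_ge_atTop 1]
    with R hL hL1 hR
  refine ⟨p * (Nat.log 2 R + 1), ?_, ?_⟩
  · have hr : p * (Nat.log 2 R + 1) + 1 ≤ 3 * p * Nat.log 2 R := by nlinarith [hp.bot_lt]
    calc 64 * (p * (Nat.log 2 R + 1) + 1) ^ 4 ≤ 64 * (3 * p * Nat.log 2 R) ^ 4 := by gcongr
      _ = 64 * (3 * p) ^ 4 * Nat.log 2 R ^ 4 := by ring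
      _ ≤ R := hL.trans (Nat.pow_log_le_self 2 (by omega))
  · rw [mul_comm, pow_mul]
    exact Nat.pow_lt_pow_left (Nat.lt_pow_succ_log_self one_lt_two R) hp

lemma exists_sq_mul_le_and_le_pow {k : ℕ} (hk : 0 < k) (hR : 8 ≤ R) (hRn : 2 * R ^ 2 * k ≤ n)
    (hkn : k ^ (s + 1) ≤ n ^ s) : ∃ Q ≥ R, 2 * Q ^ 2 * k ≤ n ∧ n ≤ Q ^ (3 * (s + 1)) := by
  set Q := Nat.sqrt (n / (2 * k))
  have hk2 : 0 < 2 * k := by omega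
  have hRQ : R ≤ Q := by
    rw [Nat.le_sqrt', Nat.le_div_iff_mul_le hk2]
    linarith
  have hQn : Q ^ 2 * (2 * k) ≤ n := (Nat.le_div_iff_mul_le hk2).1 (Nat.sqrt_le' _)
  have hnQ : n ≤ Q ^ 3 * k := by
    have hlt : n < (Q + 1) ^ 2 * (2 * k) := (Nat.div_lt_iff_lt_mul hk2).1 (Nat.lt_succ_sqrt' _)
    calc n ≤ (Q + 1) ^ 2 * (2 * k) := hlt.le
      _ ≤ (2 * Q) ^ 2 * (2 * k) := by gcongr; omega
      _ = 8 * (Q ^ 2 * k) := by ring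
      _ ≤ Q * (Q ^ 2 * k) := by gcongr; omega
      _ = Q ^ 3 * k := by ring
  have hkQ : k ≤ Q ^ (3 * s) := by
    refine Nat.le_of_mul_le_mul_left ?_ (Nat.pow_pos (n := s) hk)
    calc k ^ s * k = k ^ (s + 1) := (pow_succ k s).symm
      _ ≤ (Q ^ 3 * k) ^ s := hkn.trans (by gcongr)
      _ = k ^ s * Q ^ (3 * s) := by ring
  refine ⟨Q, hRQ, by linarith, ?_⟩
  calc n ≤ Q ^ 3 * Q ^ (3 * s) := hnQ.trans (by gcongr)
    _ = Q ^ (3 * (s + 1)) := by ring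

lemma exists_exponent_of_mul_rpow_le {δ : ℝ} (hδ : 0 < δ) :
    ∃ p : ℕ, 2 ≤ p ∧ ∀ R : ℕ, ∃ C : ℝ, 0 < C ∧ ∀ k n : ℕ, 0 < k → C * (k : ℝ) ^ (1 + δ) ≤ n →
      ∃ Q ≥ R, 2 * Q ^ 2 * k ≤ n ∧ n ≤ Q ^ p := by
  obtain ⟨s, hs⟩ := exists_nat_one_div_lt hδ
  refine ⟨3 * (s + 1 + 1), by omega, fun R => ⟨2 * ((R + 8 : ℕ) : ℝ) ^ 2, by positivity, ?_⟩⟩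
  intro k n hk hn
  have hk1 : (1 : ℝ) ≤ k := by exact_mod_cast hk
  have hRn : 2 * (R + 8) ^ 2 * k ≤ n := by
    have : (k : ℝ) ≤ (k : ℝ) ^ (1 + δ) := Real.self_le_rpow_of_one_le hk1 (by linarith)
    have : 2 * ((R + 8 : ℕ) : ℝ) ^ 2 * k ≤ n := le_trans (by gcongr) hn
    exact_mod_cast this
  have hkn : k ^ (s + 1 + 1) ≤ n ^ (s + 1) := by
    have hroot : (k : ℝ) ^ (1 + 1 / ((s : ℝ) + 1)) ≤ n := by
      refine (Real.rpow_le_rpow_of_exponent_le hk1 (add_le_add le_rfl hs.le)).trans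
        (le_trans ?_ hn)
      refine le_mul_of_one_le_left (by positivity) ?_
      have : (1 : ℝ) ≤ (R + 8 : ℕ) := by exact_mod_cast (by omega : 1 ≤ R + 8)
      nlinarith
    have hpow : ((k : ℝ) ^ (1 + 1 / ((s : ℝ) + 1))) ^ (s + 1) = (k : ℝ) ^ (s + 1 + 1) := by
      rw [← Real.rpow_mul_natCast (by positivity), ← Real.rpow_natCast]
      congr 1
      push_cast
      field_simp
    have : (k : ℝ) ^ (s + 1 + 1) ≤ (n : ℝ) ^ (s + 1) := hpow ▸ by gcongr
    exact_mod_cast this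
  obtain ⟨Q, hQ, h⟩ := exists_sq_mul_le_and_le_pow hk (by omega) hRn hkn
  exact ⟨Q, by omega, h⟩

end Asymptotics

section Extremal

variable {k m p q r t R : ℕ} {U W Z : Finset ℕ} {F F' M S : Finset (Finset ℕ)}

lemma tIntersecting.kernels (hF : tIntersecting t F) (hFr : ∀ A ∈ F, #A < 2 ^ r)
    (hRr : 64 * (r + 1) ^ 4 ≤ R) (hq : 2 * q ≤ R) : tIntersecting t (kernels R q F) := by
  intro B hB C hC
  obtain ⟨hBq, G, hGF, hG⟩ := mem_kernels.1 hB
  obtain ⟨hCq, H, hHF, hH⟩ := mem_kernels.1 hC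
  exact hG.le_card_inter hH (fun A hA A' hA' => hF A (hGF hA) A' (hHF hA')) hRr
    (fun A hA => hFr A (hGF hA)) (fun A hA => hFr A (hHF hA)) (by omega) (by omega)

lemma kernels_subset_powersetCardLT (hF : F ⊆ powersetCard k U) :
    kernels R q F ⊆ powersetCardLT (q + 1) U := fun B hB => by
  obtain ⟨hBq, G, hGF, hG⟩ := mem_kernels.1 hB
  obtain ⟨A, hA⟩ := hG.nonempty
  exact mem_powersetCardLT.2 ⟨(hG.subset A hA).trans (mem_powersetCard.1 (hF (hGF hA))).1,
    Nat.lt_succ_of_le hBq⟩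

lemma card_interFam_le_of_card_smallMeets_lt (hFU : F ⊆ powersetCard (m + t + 1) U)
    (hF' : F' ⊆ F) (hM : tIntersecting t M) (hMq : ∀ N ∈ M, #N ≤ 2 * p * (t + 1))
    (hcover : ∀ A ∈ F \ F', ∃ N ∈ M, N ⊆ A)
    (hF'card : R ^ (2 * p * (t + 1) + 1) * #F' ≤ (#U).choose (m + t + 1))
    (hfew : #(smallMeets t M) < (t + 2).choose 2) (hWU : W ⊆ U) (hW : #W = t + 2)
    (hn : 2 * R ^ 2 * (m + t + 1) ≤ #U) (hnR : #U ≤ R ^ p)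
    (hR : 2 * (t + 2).choose 2 + 2 * ((#M + 1) * 2 ^ (2 * p * (t + 1))) + 1 +
      (t + 2).choose 2 * (t + 2) ≤ R) :
    #(interFam F) ≤ #(interFam (franklFamily U W (m + t + 1) t)) := by
  have hR4 : 4 ≤ R := by
    have := Nat.mul_le_mul (Nat.one_le_of_lt hfew) (by omega : 2 ≤ t + 2)
    omega
  have hRm := (mul_add_le_two_mul_sq_mul hR4 (by omega : m ≤ m + t + 1)).trans hn
  refine (card_interFam_le hFU hF' hM hMq hcover).trans
    (le_trans ?_ (choose_mul_choose_le_card_interFam_franklFamily hWU hW m))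
  rw [card_powersetCardLT_succ]
  exact mul_add_mul_add_le_mul (mul_card_powersetCardLT_le (by omega) (by omega))
    (mul_pow_mul_le_choose (by omega) (by omega) hnR hF'card)
    (mul_choose_le_mul_choose_sub_add (hW ▸ card_le_card hWU) (by omega)) hfew hR

lemma card_interFam_le_of_powersetCard_subset_minFam (ht : 1 ≤ t) (hF : tIntersecting t F)
    (hFU : F ⊆ powersetCard (m + t + 1) U) (hS : IsMaxTIntersecting t q U S)
    (hkS : kernels R (2 * p * (t + 1)) F ⊆ S) (hZ : #Z = t + 2)
    (hZS : powersetCard (t + 1) Z ⊆ minFam S) (hRt : 2 ^ (t + 5) ≤ R)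
    (hn : 2 * R ^ 2 * (m + t + 1) ≤ #U) (hp : 2 ≤ p) (hnR : #U ≤ R ^ p)
    (hRr : 64 * (r + 1) ^ 4 ≤ R) (hr : m + t + 1 < 2 ^ r) (hZU : Z ⊆ U) :
    #(interFam F) ≤ #(interFam (franklFamily U Z (m + t + 1) t)) := by
  refine card_interFam_le_card_interFam_franklFamily_of_kernels ht hF hFU hZU hZ hRt hn hp hnR
    hRr hr fun B hB => ?_
  by_contra! hBZ
  obtain ⟨v, hv, hBv⟩ := exists_card_inter_erase_lt ht (card_pos.1 (by omega : 0 < #Z))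
    (Nat.le_of_lt_succ hBZ)
  have hvS : Z.erase v ∈ powersetCard (t + 1) Z :=
    mem_powersetCard.2 ⟨erase_subset v Z, by rw [card_erase_of_mem hv, hZ]; rfl⟩
  exact (hS.prop.2 B (hkS hB) _ (mem_minFam.1 (hZS hvS)).prop).not_gt hBv

theorem eventually_card_interFam_le (ht : 1 ≤ t) (hp : 2 ≤ p) :
    ∀ᶠ R : ℕ in Filter.atTop, ∀ (m : ℕ) (U W : Finset ℕ) (F : Finset (Finset ℕ)),
      2 * R ^ 2 * (m + t + 1) ≤ #U → #U ≤ R ^ p → W ⊆ U → #W = t + 2 →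
      F ⊆ powersetCard (m + t + 1) U → tIntersecting t F →
      #(interFam F) ≤ #(interFam (franklFamily U W (m + t + 1) t)) := by
  set q := 2 * p * (t + 1)
  filter_upwards [Filter.eventually_ge_atTop (2 ^ (t + 5)), Filter.eventually_ge_atTop (2 * q),
    Filter.eventually_ge_atTop (2 * (t + 2).choose 2 +
      2 * (((q + 1) * (q + 1) ^ q + 1) * 2 ^ q) + 1 + (t + 2).choose 2 * (t + 2)),
    eventually_exists_pow_lt_two_pow (by omega : p ≠ 0)]
    with R hRt hRq hRbig ⟨r, hRr, hpr⟩ m U W F hn hnR hWU hW hFU hF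
  have hR : 0 < R := (by positivity : 0 < 2 ^ (t + 5)).trans_le hRt
  have hkU : m + t + 1 ≤ #U := le_trans (Nat.le_mul_of_pos_left _ (by positivity)) hn
  have hr : m + t + 1 < 2 ^ r := (hkU.trans hnR).trans_lt hpr
  have hkernels : tIntersecting t (kernels R q F) :=
    hF.kernels (fun A hA => (mem_powersetCard.1 (hFU hA)).2.trans_lt hr) hRr hRq
  obtain ⟨S, hkS, hS⟩ :=
    exists_isMaxTIntersecting (kernels_subset_powersetCardLT hFU) hkernels
  have hSU {B : Finset ℕ} (hB : B ∈ minFam S) : B ⊆ U ∧ #B < q + 1 :=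
    hS.mem_powersetCardLT B (mem_minFam.1 hB).prop
  have hM : tIntersecting t (minFam S) := fun A hA B hB =>
    hS.prop.2 A (mem_minFam.1 hA).prop B (mem_minFam.1 hB).prop
  obtain hfew | ⟨A, hA, B, hB, hAB, hABS⟩ :=
    hM.card_smallMeets_lt_or_exists ht (isAntichain_minFam S)
  · set F' := {A ∈ F | ∀ B ∈ kernels R q F, ¬B ⊆ A}
    have hcover : ∀ A ∈ F \ F', ∃ N ∈ minFam S, N ⊆ A := fun A hA => by
      obtain ⟨B, hB, hBA⟩ : ∃ B ∈ kernels R q F, B ⊆ A := by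
        simpa [F', (mem_sdiff.1 hA).1] using (mem_sdiff.1 hA).2
      obtain ⟨N, hN, hNB⟩ := exists_mem_minFam_subset (hkS hB)
      exact ⟨N, hN, hNB.trans hBA⟩
    have hF'card : R ^ (q + 1) * #F' ≤ (#U).choose (m + t + 1) :=
      pow_mul_card_le_choose_of_kernels_not_subset hR (by linarith) hFU (filter_subset _ F)
        fun A hA => (mem_filter.1 hA).2
    refine card_interFam_le_of_card_smallMeets_lt hFU (filter_subset _ F) hM
      (fun N hN => Nat.le_of_lt_succ (hSU hN).2) hcover hF'card hfew hWU hW hn hnR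
      (le_trans ?_ hRbig)
    gcongr
    exact hS.card_minFam_le
  · have hZU : A ∪ B ⊆ U := union_subset (hSU hA).1 (hSU hB).1
    exact (card_interFam_le_of_powersetCard_subset_minFam ht hF hFU hS hkS hAB hABS hRt hn hp hnR
      hRr hr hZU).trans (card_interFam_franklFamily_le hZU hWU (hAB.trans hW.symm))

end Extremal

theorem stmt1_general :
    ∀ t : ℕ, 1 ≤ t → ∀ δ : ℝ, 0 < δ →
      ∃ C : ℝ, 0 < C ∧
        ∀ k n : ℕ, C * (k : ℝ) ^ (1 + δ) ≤ (n : ℝ) →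
          ∀ F ⊆ (Finset.Icc 1 n).powersetCard k, tIntersecting t F →
            (interFam F).card ≤ (interFam (At n k t)).card := by
  intro t ht δ hδ
  obtain ⟨p, hp, hC⟩ := exists_exponent_of_mul_rpow_le hδ
  obtain ⟨R, hR⟩ := Filter.eventually_atTop.1 (eventually_card_interFam_le ht hp)
  obtain ⟨C, hCpos, hC⟩ := hC (R + 4)
  refine ⟨C, hCpos, fun k n hn F hF hFt => ?_⟩
  obtain hkt | hkt := le_or_gt k t
  · have : interFam F = ∅ := by
      refine eq_empty_of_forall_notMem fun I hI => ?_
      obtain ⟨A, hA, B, hB, hne, -⟩ := mem_interFam.1 hI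
      exact (hFt A hA B hB).not_gt ((card_inter_lt_of_ne (mem_powersetCard.1 (hF hA)).2
        (mem_powersetCard.1 (hF hB)).2 hne).trans_le hkt)
    simp [this]
  · obtain ⟨m, rfl⟩ : ∃ m, k = m + t + 1 := ⟨k - t - 1, by omega⟩
    obtain ⟨Q, hQ, hQn, hnQ⟩ := hC _ n (by omega) hn
    have hWn : t + 2 ≤ n := by
      have := mul_add_le_two_mul_sq_mul (by omega : 4 ≤ Q) (by omega : m ≤ m + t + 1)
      omega
    have hcard (j : ℕ) : #(Icc 1 j) = j := by rw [Nat.card_Icc, Nat.add_sub_cancel]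
    exact hR Q (by omega) m (Icc 1 n) (Icc 1 (t + 2)) F (by rwa [hcard]) (by rwa [hcard])
      (Icc_subset_Icc_right hWn) (hcard _) hF hFt

theorem stmt1 :
    ∀ t : ℕ, 1 ≤ t →
      ∃ C : ℝ, 0 < C ∧
        ∀ k : ℕ, t + 3 ≤ k → ∀ n : ℕ,
          C * (k : ℝ) ^ ((3 : ℝ) / 2 + (10 + (t : ℝ)) / (2 * ((k : ℝ) - t - 2))) ≤ (n : ℝ) →
          ∀ F ⊆ (Finset.Icc 1 n).powersetCard k, tIntersecting t F →
            (interFam F).card ≤ (interFam (At n k t)).card := by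
  intro t ht
  obtain ⟨C, hC, h⟩ := stmt1_general t ht (1 / 2) (by norm_num)
  refine ⟨C, hC, fun k hk n hn => h k n (le_trans ?_ hn)⟩
  have hkt : (t : ℝ) + 3 ≤ k := by exact_mod_cast hk
  have hε : 0 ≤ (10 + (t : ℝ)) / (2 * ((k : ℝ) - t - 2)) :=
    div_nonneg (by positivity) (by linarith)
  exact mul_le_mul_of_nonneg_left
    (Real.rpow_le_rpow_of_exponent_le (by linarith) (by linarith)) hC.le
end

section
/- Let t ≥ 1 and n ≥ t+2 be integers and let F ⊆ binom([n], t+1) be a t-intersecting family. Then either F is a sunflower, i.e., there exists a t-element set X ⊆ [n] with X ⊆ F for every F ∈ F, or F is a (t+2)-triangle, i.e., there exists a (t+2)-element set Y ⊆ [n] such that F ⊆ Y for every F ∈ F (so that every member of F is a (t+1)-element subset of Y). -/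
open Finset

/-!
Two distinct members of a `t`-intersecting family `F` of `(t+1)`-sets meet in exactly `t` elements
and span `t + 2`. If `C ∈ F` misses an element of `A ∩ B`, then `C` has `t` elements in each
of `A` and `B` but fewer than `t` in `A ∩ B`, which forces `C ⊆ A ∪ B`; so `A`, `B`, `C` lie in
a common `(t+2)`-set. A further member `D` containing both `A ∩ B` and `A ∩ C` contains their union,
which is `A`, so `D = A`. Any other `D` misses an element of `A ∩ B` or of `A ∩ C`, so by the same
count it is contained in `A ∪ B` or in `A ∪ C`, and `A ∪ C ⊆ A ∪ B`.
-/

section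

variable {α : Type*} {F : Set (Finset α)} {S : Set α} {t : ℕ}

lemma exists_card_eq_forall_subset_of_subsingleton (hS : t ≤ S.encard)
    (hFS : ∀ A ∈ F, (A : Set α) ⊆ S) (hF : ∀ A ∈ F, t ≤ #A) (hsub : F.Subsingleton) :
    ∃ X : Finset α, (X : Set α) ⊆ S ∧ #X = t ∧ ∀ A ∈ F, X ⊆ A := by
  rcases hsub.eq_empty_or_singleton with rfl | ⟨A, rfl⟩
  · obtain ⟨X, hXS, hX⟩ := Set.exists_subset_encard_eq hS
    lift X to Finset α using Set.finite_of_encard_eq_coe hX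
    exact ⟨X, hXS, by simpa using hX, by simp⟩
  · obtain ⟨X, hXA, hX⟩ := exists_subset_card_eq (hF A rfl)
    exact ⟨X, (coe_subset.mpr hXA).trans (hFS A rfl), hX, by simpa using hXA⟩

variable [DecidableEq α] {A B C D : Finset α}

lemma card_inter_lt_of_ne_of_card_le (hne : A ≠ B) (hcard : #B ≤ #A) : #(A ∩ B) < #A :=
  card_lt_card <| inter_subset_left.ssubset_of_ne fun hAB ↦
    hne <| eq_of_subset_of_card_le (inter_eq_left.mp hAB) hcard

lemma subset_union_of_not_inter_subset (hABC : ¬ A ∩ B ⊆ C)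
    (hcard : #C + #(A ∩ B) ≤ #(C ∩ A) + #(C ∩ B) + 1) : C ⊆ A ∪ B := by
  have hlt : #(C ∩ (A ∩ B)) < #(A ∩ B) :=
    card_lt_card (inf_lt_right.mpr hABC)
  have hincl_excl : #(C ∩ (A ∪ B)) + #(C ∩ (A ∩ B)) = #(C ∩ A) + #(C ∩ B) := by
    rw [inter_union_distrib_left, inter_inter_distrib_left, card_union_add_card_inter]
  exact inter_eq_left.mp (eq_of_subset_of_card_le inter_subset_left (by lia))

lemma subset_of_inter_subset_of_inter_subset (hABC : ¬ A ∩ B ⊆ C) (hcard : #A ≤ #(A ∩ C) + 1)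
    (hB : A ∩ B ⊆ D) (hC : A ∩ C ⊆ D) : A ⊆ D := by
  have hlt : #(A ∩ C) < #(A ∩ B ∪ A ∩ C) :=
    card_lt_card <| right_lt_sup.mpr fun h ↦ hABC (h.trans inter_subset_right)
  have hA : A ∩ B ∪ A ∩ C = A :=
    eq_of_subset_of_card_le (union_subset inter_subset_left inter_subset_left) (by lia)
  exact hA.ge.trans (union_subset hB hC)

lemma isIntersectingOf_singleton_of_sized (hF : F.Sized (t + 1))
    (hint : Set.IsIntersectingOf (Set.Ici t) F) : Set.IsIntersectingOf {t} F := by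
  intro A hA B hB hne
  have hlt : #(A ∩ B) < t + 1 :=
    hF hA ▸ card_inter_lt_of_ne_of_card_le hne (by rw [hF hA, hF hB])
  exact le_antisymm (Nat.lt_succ_iff.mp hlt) (hint hA hB hne)

lemma card_union_of_isIntersectingOf_singleton (hF : F.Sized (t + 1))
    (hint : Set.IsIntersectingOf {t} F) (hA : A ∈ F) (hB : B ∈ F) (hne : A ≠ B) :
    #(A ∪ B) = t + 2 := by
  have hAB : #(A ∩ B) = t := hint hA hB hne
  have := card_union_add_card_inter A B
  have := hF hA
  have := hF hB
  lia

lemma inter_subset_or_subset_union (hF : F.Sized (t + 1)) (hint : Set.IsIntersectingOf {t} F)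
    (hA : A ∈ F) (hB : B ∈ F) (hne : A ≠ B) (hC : C ∈ F) : A ∩ B ⊆ C ∨ C ⊆ A ∪ B := by
  rcases eq_or_ne C A with rfl | hCA
  · exact Or.inl inter_subset_left
  rcases eq_or_ne C B with rfl | hCB
  · exact Or.inl inter_subset_right
  have hcard : #C + #(A ∩ B) ≤ #(C ∩ A) + #(C ∩ B) + 1 := by
    rw [hF hC, hint hA hB hne, hint hC hA hCA, hint hC hB hCB]
    lia
  exact or_iff_not_imp_left.mpr fun hABC ↦ subset_union_of_not_inter_subset hABC hcard

lemma forall_subset_union_of_not_inter_subset (hF : F.Sized (t + 1))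
    (hint : Set.IsIntersectingOf {t} F) (hA : A ∈ F) (hB : B ∈ F) (hne : A ≠ B) (hC : C ∈ F)
    (hABC : ¬ A ∩ B ⊆ C) : ∀ D ∈ F, D ⊆ A ∪ B := by
  intro D hD
  have hAC : A ≠ C := fun h ↦ hABC (h ▸ inter_subset_left)
  have hCAB : C ⊆ A ∪ B := (inter_subset_or_subset_union hF hint hA hB hne hC).resolve_left hABC
  rcases inter_subset_or_subset_union hF hint hA hB hne hD with hABD | hDAB
  · rcases inter_subset_or_subset_union hF hint hA hC hAC hD with hACD | hDAC
    · have hAD : A ⊆ D := subset_of_inter_subset_of_inter_subset hABC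
        (by rw [hF hA, hint hA hC hAC]) hABD hACD
      have hAD_eq : A = D := eq_of_subset_of_card_le hAD (by rw [hF hA, hF hD])
      exact hAD_eq ▸ subset_union_left
    · exact hDAC.trans (union_subset subset_union_left hCAB)
  · exact hDAB

theorem stmt7_general (hS : t ≤ S.encard) (hFS : ∀ A ∈ F, (A : Set α) ⊆ S)
    (hF : F.Sized (t + 1)) (hint : Set.IsIntersectingOf (Set.Ici t) F) :
    (∃ X : Finset α, (X : Set α) ⊆ S ∧ #X = t ∧ ∀ A ∈ F, X ⊆ A) ∨
    (∃ Y : Finset α, (Y : Set α) ⊆ S ∧ #Y = t + 2 ∧ ∀ A ∈ F, A ⊆ Y) := by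
  replace hint := isIntersectingOf_singleton_of_sized hF hint
  rcases F.subsingleton_or_nontrivial with hsub | ⟨A, hA, B, hB, hne⟩
  · exact Or.inl <| exists_card_eq_forall_subset_of_subsingleton hS hFS
      (fun A hA ↦ (hF hA).symm ▸ t.le_succ) hsub
  by_cases hX : ∀ C ∈ F, A ∩ B ⊆ C
  · exact Or.inl ⟨A ∩ B, (coe_subset.mpr inter_subset_left).trans (hFS A hA),
      hint hA hB hne, hX⟩
  · push Not at hX
    obtain ⟨C, hC, hABC⟩ := hX
    exact Or.inr ⟨A ∪ B, by simpa only [coe_union] using Set.union_subset (hFS A hA) (hFS B hB),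
      card_union_of_isIntersectingOf_singleton hF hint hA hB hne,
      forall_subset_union_of_not_inter_subset hF hint hA hB hne hC hABC⟩

end

theorem stmt7 (t n : ℕ) (ht : 1 ≤ t) (hn : t + 2 ≤ n) (F : Finset (Finset ℕ))
    (hF : F ⊆ (Finset.Icc 1 n).powersetCard (t + 1)) (hint : tIntersecting t F) :
    (∃ X : Finset ℕ, X ⊆ Finset.Icc 1 n ∧ X.card = t ∧ ∀ A ∈ F, X ⊆ A) ∨
    (∃ Y : Finset ℕ, Y ⊆ Finset.Icc 1 n ∧ Y.card = t + 2 ∧ ∀ A ∈ F, A ⊆ Y) := by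
  simpa only [coe_subset, mem_coe] using stmt7_general (S := (Finset.Icc 1 n : Finset ℕ)) (F := F)
    (by rw [Set.encard_coe_eq_coe_finsetCard, Nat.card_Icc]; norm_cast; lia)
    (fun A hA ↦ coe_subset.mpr (mem_powersetCard.mp (hF hA)).1)
    (fun A hA ↦ (mem_powersetCard.mp (hF hA)).2) (fun A hA B hB _ ↦ hint A hA B hB)
end
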